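/- arXiv:2201.12947 — 13 statements merged into one kernel-verified Lean document; each statement's English description precedes it below -/
import Mathlib

section
/- For every κ ∈ ℝ, every B ≥ 0, and every z with |z| ≤ B, one has log(1 + exp(κz)) ≤ log(1 + exp(κB)) − κ·(B − z)/2. -/
theorem log_one_add_exp_aux (x : ℝ) :
    Real.log (1 + Real.exp x) = x / 2 + Real.log (2 * Real.cosh (x / 2)) := by
  have h : 1 + Real.exp x = Real.exp (x / 2) * (2 * Real.cosh (x / 2)) := by
    have h1 : Real.exp (x / 2) * Real.exp (x / 2) = Real.exp x := by
      rw [← Real.exp_add]; ring_nf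
    have h2 : Real.exp (x / 2) * Real.exp (-(x / 2)) = 1 := by
      rw [← Real.exp_add]; simp
    rw [Real.cosh_eq]
    linear_combination -h1 - h2
  have hc := Real.cosh_pos (x / 2)
  rw [h, Real.log_mul (Real.exp_pos _).ne' (by positivity), Real.log_exp]

/-- For every `κ ∈ ℝ`, `B ≥ 0` and `|z| ≤ B`,
`log(1 + exp(κz)) ≤ log(1 + exp(κB)) − κ·(B − z)/2`. -/
theorem log_one_add_exp_secant (κ B z : ℝ) (hB : 0 ≤ B) (hz : |z| ≤ B) :
    Real.log (1 + Real.exp (κ * z)) ≤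
      Real.log (1 + Real.exp (κ * B)) - κ * (B - z) / 2 := by
  rw [log_one_add_exp_aux, log_one_add_exp_aux]
  have h : Real.cosh (κ * z / 2) ≤ Real.cosh (κ * B / 2) := by
    rw [Real.cosh_le_cosh, abs_div, abs_div, abs_mul, abs_mul, abs_of_nonneg hB]
    gcongr
  have hc := Real.cosh_pos (κ * z / 2)
  have := Real.log_le_log (by positivity) (mul_le_mul_of_nonneg_left h (zero_le_two (α := ℝ)))
  linarith
end

section
/- Fix B > 0, α ∈ ℝ, and θ, z ∈ [−B, B]. Define ϑ(z) := (z − θ)/(B + θ) if z < θ, ϑ(z) := 0 if z = θ, and ϑ(z) := (z − θ)/(B − θ) if z > θ. Then log(1 + exp(αz)) ≤ log((1 + exp(Bα))/(1 + exp(θα)))·|ϑ(z)| − Bα·max{0, −ϑ(z)} + log(1 + exp(θα)). -/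
/-- The piecewise function `ϑ` from Lemma on generalized secant bounds. -/
noncomputable def vartheta (B θ z : ℝ) : ℝ :=
  if z < θ then (z - θ) / (B + θ)
  else if z = θ then 0
  else (z - θ) / (B - θ)

lemma secant_aux (x y s t : ℝ) (hs : 0 ≤ s) (ht : 0 ≤ t) (hst : s + t = 1) :
    Real.log (1 + Real.exp (s * x + t * y)) ≤
      s * Real.log (1 + Real.exp x) + t * Real.log (1 + Real.exp y) := by
  have key : ∀ w : ℝ, Real.exp (-Real.log (1 + Real.exp w))
      + Real.exp (w - Real.log (1 + Real.exp w)) = 1 := by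
    intro w
    have hw : 0 < 1 + Real.exp w := by positivity
    rw [Real.exp_neg, Real.exp_sub, Real.exp_log hw]
    field_simp
  have hx := key x
  have hy := key y
  set u := Real.log (1 + Real.exp x)
  set v := Real.log (1 + Real.exp y)
  have h1 := convexOn_exp.2 (Set.mem_univ (-u)) (Set.mem_univ (-v)) hs ht hst
  have h2 := convexOn_exp.2 (Set.mem_univ (x - u)) (Set.mem_univ (y - v)) hs ht hst
  simp only [smul_eq_mul] at h1 h2
  have h3 : Real.exp (s * -u + t * -v) + Real.exp (s * (x - u) + t * (y - v)) ≤ 1 := by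
    have e : s * (Real.exp (-u) + Real.exp (x - u))
        + t * (Real.exp (-v) + Real.exp (y - v)) = 1 := by
      rw [hx, hy]; linarith
    linarith
  rw [Real.log_le_iff_le_exp (by positivity)]
  have h4 := mul_le_mul_of_nonneg_right h3 (Real.exp_pos (s * u + t * v)).le
  rw [add_mul, ← Real.exp_add, ← Real.exp_add, one_mul] at h4
  have e1 : s * -u + t * -v + (s * u + t * v) = 0 := by ring
  have e2 : s * (x - u) + t * (y - v) + (s * u + t * v) = s * x + t * y := by ring
  rwa [e1, e2, Real.exp_zero] at h4

/-- For `B > 0`, `α ∈ ℝ`, `θ, z ∈ [−B, B]`: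
`log(1 + exp(αz)) ≤ log((1 + exp(Bα))/(1 + exp(θα)))·|ϑ(z)| − Bα·max{0, −ϑ(z)} + log(1 + exp(θα))`. -/
theorem log_one_add_exp_general_secant (B α θ z : ℝ) (hB : 0 < B)
    (hθ : θ ∈ Set.Icc (-B) B) (hz : z ∈ Set.Icc (-B) B) :
    Real.log (1 + Real.exp (α * z)) ≤
      Real.log ((1 + Real.exp (B * α)) / (1 + Real.exp (θ * α))) * |vartheta B θ z|
        - B * α * max 0 (-(vartheta B θ z)) + Real.log (1 + Real.exp (θ * α)) := by
  obtain ⟨hθ1, hθ2⟩ := hθ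
  obtain ⟨hz1, hz2⟩ := hz
  rw [Real.log_div (by positivity) (by positivity)]
  rcases lt_trichotomy z θ with h | h | h
  · have hd : 0 < B + θ := by linarith
    have hv : vartheta B θ z = -((θ - z) / (B + θ)) := by
      rw [vartheta, if_pos h]; ring
    have ht : 0 ≤ (θ - z) / (B + θ) := div_nonneg (by linarith) hd.le
    have ht1 : (θ - z) / (B + θ) ≤ 1 := by rw [div_le_one hd]; linarith
    have hm : (θ - z) / (B + θ) * (B + θ) = θ - z := div_mul_cancel₀ _ hd.ne'
    rw [hv, abs_neg, neg_neg, abs_of_nonneg ht, max_eq_right ht]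
    set t := (θ - z) / (B + θ)
    have key := secant_aux (-(B * α)) (θ * α) t (1 - t) ht (by linarith) (by ring)
    have e : t * (-(B * α)) + (1 - t) * (θ * α) = α * z := by
      linear_combination (-α) * hm
    have hl : Real.log (1 + Real.exp (-(B * α))) = Real.log (1 + Real.exp (B * α)) - B * α := by
      have : 1 + Real.exp (-(B * α)) = (1 + Real.exp (B * α)) / Real.exp (B * α) := by
        rw [Real.exp_neg]; field_simp; ring
      rw [this, Real.log_div (by positivity) (by positivity), Real.log_exp]
    rw [e, hl] at key
    linarith
  · subst h
    simp [vartheta, mul_comm]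
  · have hd : 0 < B - θ := by linarith
    have hv : vartheta B θ z = (z - θ) / (B - θ) := by
      rw [vartheta, if_neg h.not_gt, if_neg h.ne']
    have ht : 0 ≤ (z - θ) / (B - θ) := div_nonneg (by linarith) hd.le
    have ht1 : (z - θ) / (B - θ) ≤ 1 := by rw [div_le_one hd]; linarith
    have hm : (z - θ) / (B - θ) * (B - θ) = z - θ := div_mul_cancel₀ _ hd.ne'
    rw [hv, abs_of_nonneg ht, max_eq_left (neg_nonpos.2 ht)]
    set t := (z - θ) / (B - θ)
    have key := secant_aux (B * α) (θ * α) t (1 - t) ht (by linarith) (by ring)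
    have e : t * (B * α) + (1 - t) * (θ * α) = α * z := by
      linear_combination α * hm
    rw [e] at key
    linarith
end

section
/- Define a doubly-indexed family a_{k,j} of nonnegative reals by: a_{1,0} = 1; and for k ≥ 1, a_{k+1,0} = 1, a_{k+1,k} = 1, and a_{k+1,j} = (j+1)·a_{k,j} + (k+1−j)·a_{k,j−1} for 0 < j < k. Then for all k ≥ 1 and all 0 ≤ j ≤ k, a_{k+1,j} ≤ k! · C(k, j), where C(k,j) is the binomial coefficient. -/
/-- Bound on the recursively defined nonnegative family `a_{k,j}`:
`a_{k+1,j} ≤ k! · C(k,j)` for all `k ≥ 1` and `0 ≤ j ≤ k`. -/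
theorem coeff_family_le_factorial_mul_choose (a : ℕ → ℕ → ℝ)
    (hnonneg : ∀ k j, 0 ≤ a k j)
    (h10 : a 1 0 = 1)
    (hzero : ∀ k, 1 ≤ k → a (k + 1) 0 = 1)
    (htop : ∀ k, 1 ≤ k → a (k + 1) k = 1)
    (hrec : ∀ k j, 1 ≤ k → 0 < j → j < k →
      a (k + 1) j = ((j : ℝ) + 1) * a k j + ((k : ℝ) + 1 - (j : ℝ)) * a k (j - 1)) :
    ∀ k j, 1 ≤ k → j ≤ k →
      a (k + 1) j ≤ (Nat.factorial k : ℝ) * (Nat.choose k j : ℝ) := by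
  intro k j hk
  induction k, hk using Nat.le_induction generalizing j with
  | base =>
    intro hj
    interval_cases j
    · rw [hzero 1 le_rfl]; simp
    · rw [htop 1 le_rfl]; simp
  | succ k hk ih =>
    intro hj
    have hf : (1 : ℝ) ≤ (Nat.factorial (k + 1) : ℝ) := by
      exact_mod_cast Nat.succ_le_of_lt (Nat.factorial_pos (k + 1))
    rcases Nat.eq_zero_or_pos j with rfl | hpos
    · rw [hzero (k + 1) (by omega)]
      simpa using hf
    rcases Nat.eq_or_lt_of_le hj with rfl | hlt
    · rw [htop (k + 1) (by omega)]
      simpa using hf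
    obtain ⟨i, rfl⟩ : ∃ i, j = i + 1 := ⟨j - 1, by omega⟩
    rw [hrec (k + 1) (i + 1) (by omega) hpos hlt, Nat.add_sub_cancel]
    have h1 := ih (i + 1) (by omega)
    have h2 := ih i (by omega)
    have hik : (i : ℝ) + 1 ≤ k := by
      have : i + 1 ≤ k := by omega
      exact_mod_cast this
    have hi : (0 : ℝ) ≤ i := Nat.cast_nonneg i
    have e1 : ((i : ℝ) + 1 + 1) * a (k + 1) (i + 1) ≤
        ((k : ℝ) + 1) * ((Nat.factorial k : ℝ) * (Nat.choose k (i + 1) : ℝ)) :=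
      mul_le_mul (by linarith) h1 (hnonneg _ _) (by linarith)
    have e2 : ((k : ℝ) + 1 + 1 - (i + 1)) * a (k + 1) i ≤
        ((k : ℝ) + 1) * ((Nat.factorial k : ℝ) * (Nat.choose k i : ℝ)) :=
      mul_le_mul (by linarith) h2 (hnonneg _ _) (by linarith)
    rw [Nat.factorial_succ, Nat.choose_succ_succ']
    push_cast
    linarith
end

section
/- For a > 0, let f(z) := a^{1+z}/(1 + a^{1+z}). Define polynomials P_k ∈ ℝ[x] by P_1 := 1 and, writing c_{k,j} for the coefficient of x^j in P_k: c_{k+1,k} = (−1)^k, c_{k+1,0} = 1, and c_{k+1,j} = (j+1)·c_{k,j} − (k+1−j)·c_{k,j−1} for 0 < j < k. Then for every integer k ≥ 1 and every z ∈ ℝ, the k-th derivative of f satisfies f^{(k)}(z) = (log a)^k · a^{1+z}/(1 + a^{1+z})^{k+1} · P_k(a^{1+z}). Equivalently, P_{k+1}(x) = (−k x + 1)·P_k(x) + x(1+x)·P_k'(x). -/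
open Polynomial

/-- The function `f(z) = a^{1+z}/(1 + a^{1+z})` (with `a^{1+z}` the real power). -/
noncomputable def sigmoidPow (a : ℝ) (z : ℝ) : ℝ := a ^ (1 + z) / (1 + a ^ (1 + z))

/-- For `a > 0` and `P_k` the polynomials defined by the coefficient recursion
(`P_1 = 1`, `c_{k+1,k} = (−1)^k`, `c_{k+1,0} = 1`,
`c_{k+1,j} = (j+1)·c_{k,j} − (k+1−j)·c_{k,j−1}` for `0 < j < k`, with `deg P_k ≤ k−1`),
the k-th derivative of `f(z) = a^{1+z}/(1+a^{1+z})` is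
`f^{(k)}(z) = (log a)^k · a^{1+z}/(1+a^{1+z})^{k+1} · P_k(a^{1+z})`; equivalently the
polynomials satisfy `P_{k+1}(x) = (−k·x + 1)·P_k(x) + x(1+x)·P_k'(x)`. -/
theorem iteratedDeriv_sigmoidPow (a : ℝ) (ha : 0 < a) (P : ℕ → Polynomial ℝ)
    (hP1 : P 1 = 1)
    (htop : ∀ k, 1 ≤ k → (P (k + 1)).coeff k = (-1 : ℝ) ^ k)
    (hzero : ∀ k, 1 ≤ k → (P (k + 1)).coeff 0 = 1)
    (hrec : ∀ k j, 1 ≤ k → 0 < j → j < k →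
      (P (k + 1)).coeff j =
        ((j : ℝ) + 1) * (P k).coeff j - ((k : ℝ) + 1 - (j : ℝ)) * (P k).coeff (j - 1))
    (hdeg : ∀ k, 1 ≤ k → (P k).natDegree ≤ k - 1) :
    (∀ k, 1 ≤ k → ∀ z : ℝ,
      iteratedDeriv k (sigmoidPow a) z =
        (Real.log a) ^ k * a ^ (1 + z) / (1 + a ^ (1 + z)) ^ (k + 1)
          * (P k).eval (a ^ (1 + z))) ∧
    (∀ k, 1 ≤ k →
      P (k + 1) = (Polynomial.C (-(k : ℝ)) * Polynomial.X + 1) * P k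
        + Polynomial.X * (1 + Polynomial.X) * Polynomial.derivative (P k)) := by
  have hpoly : ∀ k, 1 ≤ k →
      P (k + 1) = (Polynomial.C (-(k : ℝ)) * Polynomial.X + 1) * P k
        + Polynomial.X * (1 + Polynomial.X) * Polynomial.derivative (P k) := by
    intro k hk
    have hc0 : (P k).coeff 0 = 1 := by
      rcases Nat.exists_eq_add_of_le' hk with ⟨m, rfl⟩
      rcases Nat.eq_zero_or_pos m with rfl | hm
      · simp [hP1]
      · exact hzero m hm
    have hct : (P k).coeff (k - 1) = (-1 : ℝ) ^ (k - 1) := by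
      rcases Nat.exists_eq_add_of_le' hk with ⟨m, rfl⟩
      rcases Nat.eq_zero_or_pos m with rfl | hm
      · simp [hP1]
      · exact htop m hm
    have hbig : ∀ j, k ≤ j → (P k).coeff j = 0 := fun j hj =>
      Polynomial.coeff_eq_zero_of_natDegree_lt (by have := hdeg k hk; omega)
    have hre : (Polynomial.C (-(k : ℝ)) * Polynomial.X + 1) * P k
        + Polynomial.X * (1 + Polynomial.X) * Polynomial.derivative (P k)
        = Polynomial.C (-(k : ℝ)) * (Polynomial.X * P k) + P k
          + Polynomial.X * Polynomial.derivative (P k)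
          + Polynomial.X * (Polynomial.X * Polynomial.derivative (P k)) := by ring
    rw [hre]
    ext j
    rcases j with _ | j
    · simp [hzero k hk, hc0]
    · have hR : (Polynomial.C (-(k : ℝ)) * (Polynomial.X * P k) + P k
          + Polynomial.X * Polynomial.derivative (P k)
          + Polynomial.X * (Polynomial.X * Polynomial.derivative (P k))).coeff (j + 1)
          = ((j : ℝ) + 2) * (P k).coeff (j + 1) - ((k : ℝ) - j) * (P k).coeff j := by
        simp only [Polynomial.coeff_add, Polynomial.coeff_C_mul, Polynomial.coeff_X_mul,
          Polynomial.coeff_derivative]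
        rcases j with _ | j
        · simp
          ring
        · simp only [Polynomial.coeff_X_mul, Polynomial.coeff_derivative]
          push_cast
          ring
      rw [hR]
      rcases lt_trichotomy (j + 1) k with h | h | h
      · rw [hrec k (j + 1) hk (by omega) h]
        push_cast
        ring
      · subst h
        rw [htop _ hk, hbig (j + 1) le_rfl]
        simp only [Nat.add_sub_cancel] at hct
        rw [hct]
        push_cast
        ring
      · rw [hbig (j + 1) (by omega), hbig j (by omega),
          Polynomial.coeff_eq_zero_of_natDegree_lt]
        · ring
        · have := hdeg (k + 1) (by omega)
          omega
  refine ⟨?_, hpoly⟩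
  have hx : ∀ z : ℝ, HasDerivAt (fun z : ℝ => a ^ (1 + z)) (Real.log a * a ^ (1 + z)) z := by
    intro z
    have := ((hasDerivAt_id z).const_add 1).const_rpow ha
    simpa using this
  have hpos : ∀ z : ℝ, 0 < a ^ (1 + z) := fun z => Real.rpow_pos_of_pos ha _
  intro k hk
  induction k, hk using Nat.le_induction with
  | base =>
    intro z
    have hne : 1 + a ^ (1 + z) ≠ 0 := by have := hpos z; positivity
    have h : HasDerivAt (sigmoidPow a) _ z := (hx z).div ((hx z).const_add 1) hne
    rw [iteratedDeriv_one, h.deriv, hP1]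
    simp only [Polynomial.eval_one]
    field_simp
    ring
  | succ k hk ih =>
    intro z
    have hne : 1 + a ^ (1 + z) ≠ 0 := by have := hpos z; positivity
    rw [iteratedDeriv_succ, funext ih]
    have h := (((hx z).const_mul (Real.log a ^ k)).div
      (((hx z).const_add 1).pow (k + 1)) (pow_ne_zero _ hne)).mul
      (((P k).hasDerivAt (a ^ (1 + z))).comp z (hx z))
    refine Eq.trans (HasDerivAt.deriv h) ?_
    rw [hpoly k hk]
    simp only [Polynomial.eval_add, Polynomial.eval_mul, Polynomial.eval_C, Polynomial.eval_X,
      Polynomial.eval_one, Function.comp, Pi.div_apply, Pi.pow_apply, Nat.add_sub_cancel]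
    generalize a ^ (1 + z) = x at *
    push_cast
    field_simp
    ring
end

section
/- Let 0 < B ≤ 3, let u ∈ (0,1) satisfy |logit(u)| ≤ B, and let α ∈ ℝ satisfy |α − 1| ≤ 1/B. Set v := T_α(u). Then KL(u‖v) ≤ π²/(6·(2 + exp(B) + exp(−B))). -/
/-- `logit u = log(u/(1−u))`. -/
noncomputable def logit (u : ℝ) : ℝ := Real.log (u / (1 - u))

/-- The α-correction of `u`: `T α u = u^α / (u^α + (1-u)^α)`. -/
noncomputable def alphaCorr (α u : ℝ) : ℝ := u ^ α / (u ^ α + (1 - u) ^ α)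

/-- KL divergence between `Bernoulli u` and `Bernoulli v`. -/
noncomputable def bernKL (u v : ℝ) : ℝ :=
  u * Real.log (u / v) + (1 - u) * Real.log ((1 - u) / (1 - v))

theorem aux_exp (d : ℝ) (hd : |d| ≤ 1) : Real.exp d - 1 - d ≤ 13/18 * d^2 := by
  have h := Real.exp_bound hd (n := 3) (by norm_num)
  simp [Finset.sum_range_succ, Nat.factorial] at h
  have h2 := (abs_le.mp h).2
  have h3 : |d|^3 ≤ d^2 := by
    rw [pow_succ, sq_abs]
    nlinarith [sq_nonneg d]
  norm_num at h2
  nlinarith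

theorem aux_lower (a : ℝ) : 1 + a^2/2 + a^4/24 ≤ Real.cosh a := by
  have h := Real.hasSum_cosh a
  have := sum_le_hasSum (Finset.range 3) (fun i _ => by
    rw [pow_mul]; positivity) h
  simp [Finset.sum_range_succ, Nat.factorial] at this
  linarith

theorem aux_upper0 (y : ℝ) (hy : |y| ≤ 1) : Real.cosh y ≤ 1 + y^2/2 + 5/96*y^4 := by
  have h := Real.exp_bound hy (n := 4) (by norm_num)
  have h' := Real.exp_bound (x := -y) (by rwa [abs_neg]) (n := 4) (by norm_num)
  have e : |y|^4 = y^4 := by rw [show (4:ℕ) = 2*2 from rfl, pow_mul, sq_abs, ← pow_mul]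
  rw [abs_neg] at h'
  rw [e] at h h'
  simp [Finset.sum_range_succ, Nat.factorial] at h h'
  have h2 := (abs_le.mp h).2
  have h2' := (abs_le.mp h').2
  norm_num at h2 h2'
  rw [Real.cosh_eq]
  nlinarith

theorem aux_upper (b : ℝ) (hb0 : 0 ≤ b) (hb : b ≤ 3/2) :
    Real.cosh b ≤ 1 + b^2/2 + b^4/20 := by
  have h := aux_upper0 (b/2) (by rw [abs_le]; constructor <;> linarith)
  have h1 : Real.cosh b = 2 * Real.cosh (b/2)^2 - 1 := by
    have := Real.cosh_sq (b/2)
    have h2 := Real.cosh_two_mul (b/2)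
    rw [show 2 * (b/2) = b by ring] at h2
    linarith
  obtain ⟨s, hs⟩ : ∃ s, s = b^2/4 := ⟨_, rfl⟩
  have hs0 : 0 ≤ s := by rw [hs]; positivity
  have hs1 : s ≤ 9/16 := by rw [hs]; nlinarith
  have h3 : Real.cosh (b/2) ≤ 1 + s/2 + 5/96*s^2 := by rw [hs]; nlinarith
  have h4 : Real.cosh (b/2)^2 ≤ (1 + s/2 + 5/96*s^2)^2 :=
    pow_le_pow_left₀ (Real.cosh_pos _).le h3 2
  have h5 : 2 * (1 + s/2 + 5/96*s^2)^2 - 1 ≤ 1 + 2*s + 4/5*s^2 := by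
    have : 5/48*s + 25/4608*s^2 ≤ 4/5 - 17/24 := by nlinarith
    nlinarith [mul_le_mul_of_nonneg_left this (sq_nonneg s)]
  have h6 : 1 + 2*s + 4/5*s^2 = 1 + b^2/2 + b^4/20 := by rw [hs]; ring
  linarith

theorem aux_cosh (a b : ℝ) (ha : 0 ≤ a) (hab : a ≤ b) (hb : b ≤ 3/2) :
    a * Real.cosh b ≤ 533/500 * (b * Real.cosh a) := by
  have hb0 : 0 ≤ b := ha.trans hab
  have hU := mul_le_mul_of_nonneg_left (aux_upper b hb0 hb) ha
  have hL := mul_le_mul_of_nonneg_left (aux_lower a) hb0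
  suffices a * (1 + b^2/2 + b^4/20) ≤ 533/500 * (b * (1 + a^2/2 + a^4/24)) by linarith
  rcases le_total b 1 with h1 | h1
  · have hq : a*b ≤ 1 := by nlinarith
    have hab0 : 0 ≤ a * b := mul_nonneg ha hb0
    have hr : a^2+a*b+b^2 ≤ 3 := by nlinarith
    have hf : 0 ≤ 1 - a*b/2 - a*b*(a^2+a*b+b^2)/20 := by nlinarith
    have k1 : a * (1 + b^2/2 + b^4/20) ≤ b * (1 + a^2/2 + a^4/20) := by
      nlinarith [mul_nonneg (sub_nonneg.2 hab) hf]
    have ha4 : a^4 ≤ 1 := pow_le_one₀ ha (hab.trans h1)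
    have k2 : (1 + a^2/2 + a^4/20) ≤ 533/500 * (1 + a^2/2 + a^4/24) := by
      nlinarith [sq_nonneg a]
    nlinarith [mul_le_mul_of_nonneg_left k2 hb0]
  · have k1 : 1 + b^2/2 + b^4/20 ≤ 8/5*b := by
      have e : b^2 ≤ 5/2*b - 3/2 := by nlinarith
      have : b^4 ≤ (5/2*b - 3/2)^2 := by
        rw [show b^4 = (b^2)^2 by ring]; exact pow_le_pow_left₀ (sq_nonneg b) e 2
      nlinarith
    have k2 : 188/125*a ≤ 1 + a^2/2 + a^4/24 := by
      nlinarith [sq_nonneg (a^2 - 36/25), sq_nonneg (a - 6/5)]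
    have := mul_le_mul_of_nonneg_left k1 ha
    have := mul_le_mul_of_nonneg_left k2 hb0
    nlinarith [mul_nonneg ha hb0]

theorem aux_KL (u : ℝ) (hu0 : 0 < u) (hu1 : u < 1) (α : ℝ)
    (hd : |(α-1) * logit u| ≤ 1) :
    bernKL u (alphaCorr α u) ≤ 13/9 * ((α-1) * logit u)^2 * (u*(1-u)) := by
  have hw : 0 < 1 - u := by linarith
  have hx : logit u = Real.log u - Real.log (1-u) := Real.log_div hu0.ne' hw.ne'
  have hua : 0 < u^α := Real.rpow_pos_of_pos hu0 _
  have hwa : 0 < (1-u)^α := Real.rpow_pos_of_pos hw _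
  have hv1 : 1 - alphaCorr α u = (1-u)^α / (u^α + (1-u)^α) := by
    unfold alphaCorr; field_simp; ring
  have l1 : Real.log (u / alphaCorr α u)
      = Real.log (u^α + (1-u)^α) - (α-1) * Real.log u := by
    unfold alphaCorr
    rw [Real.log_div hu0.ne' (by positivity), Real.log_div hua.ne' (by positivity),
      Real.log_rpow hu0]; ring
  have l2 : Real.log ((1-u) / (1 - alphaCorr α u))
      = Real.log (u^α + (1-u)^α) - (α-1) * Real.log (1-u) := by
    rw [hv1, Real.log_div hw.ne' (by positivity), Real.log_div hwa.ne' (by positivity),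
      Real.log_rpow hw]; ring
  have eu : u^α = u * Real.exp ((α-1) * Real.log u) := by
    rw [Real.rpow_def_of_pos hu0]
    nth_rewrite 2 [← Real.exp_log hu0]
    rw [← Real.exp_add]; congr 1; ring
  have ew : (1-u)^α = (1-u) * Real.exp ((α-1) * Real.log (1-u)) := by
    rw [Real.rpow_def_of_pos hw]
    nth_rewrite 2 [← Real.exp_log hw]
    rw [← Real.exp_add]; congr 1; ring
  obtain ⟨d, hdd⟩ : ∃ d, d = (α-1) * logit u := ⟨_, rfl⟩
  rw [← hdd] at hd ⊢
  have hd' : (α-1) * Real.log u = (α-1) * Real.log (1-u) + d := by rw [hdd, hx]; ring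
  have hpe := Real.exp_pos d
  have hpn := Real.exp_pos (-d)
  have s1 : Real.log (u^α + (1-u)^α) ≤ (α-1) * Real.log (1-u) + u*(Real.exp d - 1) := by
    have : u^α + (1-u)^α = Real.exp ((α-1) * Real.log (1-u)) * (u * Real.exp d + (1-u)) := by
      rw [eu, ew, hd', Real.exp_add]; ring
    rw [this, Real.log_mul (Real.exp_pos _).ne' (by positivity), Real.log_exp]
    have := Real.log_le_sub_one_of_pos (show 0 < u * Real.exp d + (1-u) by positivity)
    linarith
  have s2 : Real.log (u^α + (1-u)^α) ≤ (α-1) * Real.log u + (1-u)*(Real.exp (-d) - 1) := by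
    have : u^α + (1-u)^α = Real.exp ((α-1) * Real.log u) * (u + (1-u) * Real.exp (-d)) := by
      rw [eu, ew, show (α-1) * Real.log (1-u) = (α-1) * Real.log u + -d by linarith,
        Real.exp_add]; ring
    rw [this, Real.log_mul (Real.exp_pos _).ne' (by positivity), Real.log_exp]
    have := Real.log_le_sub_one_of_pos (show 0 < u + (1-u) * Real.exp (-d) by positivity)
    linarith
  have e1 := mul_le_mul_of_nonneg_left (aux_exp d hd) hu0.le
  have e2 := mul_le_mul_of_nonneg_left (aux_exp (-d) (by rwa [abs_neg])) hw.le
  have hK : bernKL u (alphaCorr α u) = Real.log (u^α + (1-u)^α)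
      - (α-1) * Real.log (1-u) - u * d := by
    unfold bernKL; rw [l1, l2, hd']; ring
  have k1 : bernKL u (alphaCorr α u) ≤ 13/18 * d^2 * u := by rw [hK]; linarith
  have k2 : bernKL u (alphaCorr α u) ≤ 13/18 * d^2 * (1-u) := by rw [hK]; linarith
  have hd2 := sq_nonneg d
  rcases le_total u (1/2) with h | h
  · nlinarith [mul_nonneg (mul_nonneg hd2 hu0.le) (sub_nonneg.2 h)]
  · nlinarith [mul_nonneg (mul_nonneg hd2 hw.le) (sub_nonneg.2 h)]

theorem aux_four (x : ℝ) : 2 + Real.exp x + Real.exp (-x) = 4 * Real.cosh (x/2)^2 := by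
  have h1 : Real.exp x = Real.exp (x/2) * Real.exp (x/2) := by rw [← Real.exp_add]; ring_nf
  have h2 : Real.exp (-x) = Real.exp (-(x/2)) * Real.exp (-(x/2)) := by
    rw [← Real.exp_add]; ring_nf
  have h3 : Real.exp (x/2) * Real.exp (-(x/2)) = 1 := by rw [← Real.exp_add]; simp
  rw [Real.cosh_eq, h1, h2]
  linear_combination (-2) * h3

/-- For `0 < B ≤ 3`, `u ∈ (0,1)` with `|logit u| ≤ B`, and `|α − 1| ≤ 1/B`,
`KL(u ‖ T_α(u)) ≤ π²/(6(2 + e^B + e^{−B}))`. -/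
theorem bernKL_alphaCorr_le (B : ℝ) (hB0 : 0 < B) (hB3 : B ≤ 3)
    (u : ℝ) (hu0 : 0 < u) (hu1 : u < 1) (hlogit : |logit u| ≤ B)
    (α : ℝ) (hα : |α - 1| ≤ 1 / B) :
    bernKL u (alphaCorr α u) ≤
      Real.pi ^ 2 / (6 * (2 + Real.exp B + Real.exp (-B))) := by
  have hw : 0 < 1 - u := by linarith
  have hdx : |(α-1) * logit u| ≤ |logit u| / B := by
    rw [abs_mul]
    calc _ ≤ 1/B * |logit u| := mul_le_mul_of_nonneg_right hα (abs_nonneg _)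
      _ = _ := by ring
  have hd : |(α-1) * logit u| ≤ 1 := hdx.trans ((div_le_one hB0).2 hlogit)
  have hK := aux_KL u hu0 hu1 α hd
  have hd2 : ((α-1) * logit u)^2 ≤ (|logit u| / B)^2 := by
    rw [← sq_abs]; exact pow_le_pow_left₀ (abs_nonneg _) hdx 2
  have hc := aux_cosh (|logit u|/2) (B/2) (by positivity) (by linarith) (by linarith)
  have hcx : Real.cosh (|logit u|/2) = Real.cosh (logit u/2) := by
    rw [← Real.cosh_abs (logit u/2), abs_div]; norm_num
  have hv : u*(1-u) * (4 * Real.cosh (logit u/2)^2) = 1 := by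
    rw [← aux_four, Real.exp_neg]
    unfold logit
    rw [Real.exp_log (by positivity)]
    field_simp
    ring
  rw [hcx] at hc
  rw [aux_four]
  obtain ⟨C, hC⟩ : ∃ C, C = Real.cosh (B/2) := ⟨_, rfl⟩
  obtain ⟨D, hD⟩ : ∃ D, D = Real.cosh (logit u/2) := ⟨_, rfl⟩
  have hC0 : 0 < C := hC ▸ Real.cosh_pos _
  have hD0 : 0 < D := hD ▸ Real.cosh_pos _
  rw [← hC, ← hD] at hc
  rw [← hD] at hv
  rw [← hC]
  have huv : u*(1-u) = 1/(4*D^2) := by rw [eq_div_iff (by positivity)]; exact hv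
  rw [huv] at hK
  have hr : |logit u| / B ≤ 533/500 * (D / C) := by
    rw [← mul_div_assoc, div_le_div_iff₀ hB0 hC0]; linarith
  have hr2 : ((α-1) * logit u)^2 ≤ (533/500 * (D / C))^2 :=
    hd2.trans (pow_le_pow_left₀ (by positivity) hr 2)
  have hpi : 13/9 * (533/500)^2 ≤ Real.pi^2/6 := by nlinarith [Real.pi_gt_d2]
  calc _ ≤ _ := hK
    _ ≤ 13/9 * (533/500 * (D / C))^2 * (1/(4*D^2)) := by gcongr
    _ = (13/9 * (533/500)^2) / (4*C^2) := by field_simp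
    _ ≤ (Real.pi^2/6) / (4*C^2) := by gcongr
    _ = _ := by field_simp
end

section
/- Let 0 < B ≤ 3, let μ be a probability measure on a measurable space X, let ρ_u : X → ℝ be measurable with 1/(1+exp(B)) ≤ ρ_u(x) ≤ 1/(1+exp(−B)) for μ-almost every x, and let α : X → ℝ be measurable with |α(x) − 1| ≤ 1/B for μ-almost every x. Define ρ_f(x) := T_{α(x)}(ρ_u(x)). Then ∫_X KL(ρ_u(x)‖ρ_f(x)) dμ(x) ≤ π²/(6·(2 + exp(B) + exp(−B))). -/
open MeasureTheory

lemma aux_exp_up (z : ℝ) (hz : |z| ≤ 1) :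
    Real.exp z ≤ 1 + z + z^2/2 + z^3/6 + z^4*(5/96) := by
  have h := Real.exp_bound hz (n := 4) (by norm_num)
  have h4 : |z|^4 = z^4 := by
    rw [show (4:ℕ) = 2*2 from rfl, pow_mul, pow_mul, sq_abs]
  rw [h4] at h
  have := (abs_le.1 h).2
  norm_num [Finset.sum_range_succ, Nat.factorial] at this
  linarith

lemma aux_cosh_quarter (z : ℝ) (h0 : 0 ≤ z) (hz : z ≤ 3/4) :
    Real.cosh z - 1 ≤ (53/100) * z^2 := by
  have h1 := aux_exp_up z (by rw [abs_of_nonneg h0]; linarith)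
  have h2 := aux_exp_up (-z) (by rw [abs_neg, abs_of_nonneg h0]; linarith)
  rw [Real.cosh_eq]
  have : z^2 ≤ 9/16 := by nlinarith
  nlinarith [mul_nonneg (sq_nonneg z) (sub_nonneg.2 this)]

lemma aux_cosh_dbl (z : ℝ) : Real.cosh (2*z) - 1
    = (Real.cosh z - 1) * (4 + 2 * (Real.cosh z - 1)) := by
  rw [Real.cosh_two_mul, Real.sinh_sq]; ring

lemma aux_cosh_up (B : ℝ) (h0 : 0 ≤ B) (hB : B ≤ 3) :
    Real.cosh B - 1 ≤ (11/10) * B^2 := by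
  have h1 := aux_cosh_quarter (B/4) (by linarith) (by linarith)
  have h2 := aux_cosh_dbl (B/4)
  have h3 := aux_cosh_dbl (B/2)
  rw [show 2*(B/4) = B/2 by ring] at h2
  rw [show 2*(B/2) = B by ring] at h3
  have p1 : 0 ≤ Real.cosh (B/4) - 1 := by linarith [Real.one_le_cosh (B/4)]
  have p2 : 0 ≤ Real.cosh (B/2) - 1 := by linarith [Real.one_le_cosh (B/2)]
  have hq : B^2 ≤ 9 := by nlinarith
  have k1 : Real.cosh (B/4) - 1 ≤ 3/10 := by nlinarith
  have k2 : Real.cosh (B/2) - 1 ≤ (46/10) * (53/1600 * B^2) := by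
    rw [h2]
    nlinarith
  have k3 : Real.cosh (B/2) - 1 ≤ 138/100 := by nlinarith
  rw [h3]
  nlinarith

lemma aux_cosh_low (t : ℝ) : 1 + t^2/2 ≤ Real.cosh t := by
  have h : Real.cosh t = 1 + 2 * Real.sinh (t/2)^2 := by
    have := Real.cosh_two_mul (t/2)
    rw [show 2*(t/2) = t by ring, Real.cosh_sq] at this
    linarith
  have h2 : (t/2)^2 ≤ Real.sinh (t/2)^2 := by
    rw [sq_le_sq]
    rcases le_total 0 (t/2) with h0 | h0
    · have := Real.self_le_sinh_iff.2 h0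
      rw [abs_of_nonneg h0, abs_of_nonneg (by linarith)]; exact this
    · have := Real.sinh_le_self_iff.2 h0
      rw [abs_of_nonpos h0, abs_of_nonpos (by linarith)]; linarith
  rw [h]; nlinarith

lemma aux_G (u x : ℝ) (hu0 : 0 < u) (hu1 : u < 1) (hx : 0 ≤ x) :
    Real.log (1 - u + u * Real.exp x) - u * x ≤ u * (1 - u) * (Real.exp x - 1 - x) := by
  have hpos : ∀ y : ℝ, 0 < 1 - u + u * Real.exp y := fun y => by
    have := Real.exp_pos y
    have : 0 < u * Real.exp y := by positivity
    linarith
  let F : ℝ → ℝ := fun y => u * (1 - u) * (Real.exp y - 1 - y)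
    - (Real.log (1 - u + u * Real.exp y) - u * y)
  have hd : ∀ y, HasDerivAt F (u * (1 - u) * (Real.exp y - 1)
      - (u * Real.exp y / (1 - u + u * Real.exp y) - u)) y := by
    intro y
    have e := Real.hasDerivAt_exp y
    have a1 := ((e.sub_const 1).sub (hasDerivAt_id y)).const_mul (u * (1 - u))
    have a2 := ((e.const_mul u).const_add (1 - u)).log (hpos y).ne'
    have a3 := a2.sub ((hasDerivAt_id y).const_mul u)
    have a4 := a1.sub a3
    simp only [mul_one] at a4
    exact a4
  have hm : MonotoneOn F (Set.Ici 0) := by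
    apply monotoneOn_of_deriv_nonneg (convex_Ici 0)
    · exact fun y _ => (hd y).continuousAt.continuousWithinAt
    · exact fun y _ => (hd y).differentiableAt.differentiableWithinAt
    · intro y hy
      rw [interior_Ici] at hy
      rw [(hd y).deriv]
      have hy0 : 0 ≤ y := le_of_lt hy
      have he : 0 ≤ Real.exp y - 1 := by linarith [Real.add_one_le_exp y]
      have h1 : u * Real.exp y / (1 - u + u * Real.exp y) - u
          = u * (1 - u) * (Real.exp y - 1) / (1 - u + u * Real.exp y) := by
        field_simp [(hpos y).ne']
        ring
      rw [h1, sub_nonneg]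
      apply div_le_self
      · have : 0 ≤ 1 - u := by linarith
        positivity
      · nlinarith
  have := hm (Set.mem_Ici.2 le_rfl) (Set.mem_Ici.2 hx) hx
  simp only [F] at this
  simp at this
  linarith

lemma aux_G2 (u x : ℝ) (hu0 : 0 < u) (hu1 : u < 1) :
    Real.log (1 - u + u * Real.exp x) - u * x ≤ u * (1 - u) * (Real.exp |x| - 1 - |x|) := by
  rcases le_total 0 x with h | h
  · rw [abs_of_nonneg h]; exact aux_G u x hu0 hu1 h
  · rw [abs_of_nonpos h]
    have := aux_G (1-u) (-x) (by linarith) (by linarith) (by linarith)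
    have e : 1 - u + u * Real.exp x
        = Real.exp x * (1 - (1-u) + (1-u) * Real.exp (-x)) := by
      rw [Real.exp_neg]; field_simp [(Real.exp_pos x).ne']; ring
    have hp : 0 < 1 - (1-u) + (1-u) * Real.exp (-x) := by
      have : 0 < (1-u) * Real.exp (-x) := mul_pos (by linarith) (Real.exp_pos _)
      linarith
    rw [e, Real.log_mul (Real.exp_pos x).ne' hp.ne', Real.log_exp]
    nlinarith

lemma aux_KL_s7 (u α : ℝ) (hu0 : 0 < u) (hu1 : u < 1) :
    bernKL u (alphaCorr α u) =
      Real.log (1 - u + u * Real.exp ((α - 1) * (Real.log u - Real.log (1 - u))))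
        - u * ((α - 1) * (Real.log u - Real.log (1 - u))) := by
  have hv0 : 0 < 1 - u := by linarith
  have p1 : 0 < u ^ α := Real.rpow_pos_of_pos hu0 α
  have p2 : 0 < (1-u) ^ α := Real.rpow_pos_of_pos hv0 α
  have hS : 0 < u ^ α + (1-u) ^ α := by positivity
  have e1 : 1 - alphaCorr α u = (1-u)^α / (u ^ α + (1-u) ^ α) := by
    unfold alphaCorr; field_simp; ring
  have hSl : u ^ α + (1-u) ^ α = Real.exp ((α - 1) * Real.log (1-u)) *
      (1 - u + u * Real.exp ((α - 1) * (Real.log u - Real.log (1 - u)))) := by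
    have q1 : u ^ α = u * (Real.exp ((α - 1) * Real.log (1-u)) *
        Real.exp ((α - 1) * (Real.log u - Real.log (1 - u)))) := by
      rw [← Real.exp_add, ← mul_add, add_sub_cancel, mul_comm (α - 1),
        ← Real.rpow_def_of_pos hu0, Real.rpow_sub_one hu0.ne']
      field_simp
    have q2 : (1-u) ^ α = (1 - u) * Real.exp ((α - 1) * Real.log (1-u)) := by
      rw [mul_comm (α - 1), ← Real.rpow_def_of_pos hv0, Real.rpow_sub_one hv0.ne']
      field_simp
    rw [q1, q2]
    ring
  have hp : 0 < 1 - u + u * Real.exp ((α - 1) * (Real.log u - Real.log (1 - u))) := by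
    have := mul_pos hu0 (Real.exp_pos ((α - 1) * (Real.log u - Real.log (1 - u))))
    linarith
  have hL := congrArg Real.log hSl
  rw [Real.log_mul (Real.exp_pos _).ne' hp.ne', Real.log_exp] at hL
  unfold bernKL
  rw [e1]
  unfold alphaCorr
  rw [Real.log_div hu0.ne' (by positivity), Real.log_div hv0.ne' (by positivity),
    Real.log_div p1.ne' hS.ne', Real.log_div p2.ne' hS.ne', Real.log_rpow hu0,
    Real.log_rpow hv0, hL]
  ring

set_option maxHeartbeats 2000000 in
lemma aux_pt (B u α : ℝ) (hB0 : 0 < B) (hB3 : B ≤ 3)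
    (h1 : 1 / (1 + Real.exp B) ≤ u) (h2 : u ≤ 1 / (1 + Real.exp (-B)))
    (hα : |α - 1| ≤ 1 / B) :
    bernKL u (alphaCorr α u) ≤
      Real.pi ^ 2 / (6 * (2 + Real.exp B + Real.exp (-B))) := by
  have eB := Real.exp_pos B
  have enB := Real.exp_pos (-B)
  have hu0 : 0 < u := lt_of_lt_of_le (by positivity) h1
  have hu1 : u < 1 := lt_of_le_of_lt h2 (by rw [div_lt_one (by positivity)]; linarith)
  have hv0 : 0 < 1 - u := by linarith
  rw [aux_KL_s7 u α hu0 hu1]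
  set t := Real.log u - Real.log (1 - u) with ht
  have hexp : Real.exp t = u / (1-u) := by
    rw [ht, Real.exp_sub, Real.exp_log hu0, Real.exp_log hv0]
  have hexpn : Real.exp (-t) = (1-u)/u := by
    rw [Real.exp_neg, hexp, inv_div]
  have htB : |t| ≤ B := by
    rw [div_le_iff₀ (by positivity)] at h1
    rw [le_div_iff₀ (by positivity)] at h2
    rw [abs_le]
    constructor
    · rw [neg_le, ← Real.exp_le_exp, hexpn, div_le_iff₀ hu0]; linarith
    · have : -B ≤ -t := by
        rw [← Real.exp_le_exp, hexpn, le_div_iff₀ hu0]; linarith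
      linarith
  have hD : u * (1-u) * (2 + 2 * Real.cosh t) = 1 := by
    rw [Real.cosh_eq, hexp, hexpn]; field_simp; ring
  have hDB : 2 + Real.exp B + Real.exp (-B) = 2 + 2 * Real.cosh B := by
    rw [Real.cosh_eq]; ring
  rw [hDB]
  set x := (α - 1) * t with hx
  have hxB : |x| * B ≤ |t| := by
    rw [hx, abs_mul]
    rw [le_div_iff₀ hB0] at hα
    nlinarith [abs_nonneg t]
  have hx1 : |x| ≤ 1 := by
    by_contra hc
    push Not at hc
    nlinarith
  have hG := aux_G2 u x hu0 hu1
  have he := aux_exp_up |x| (by rwa [abs_abs])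
  have hx0 := abs_nonneg x
  have hq : Real.exp |x| - 1 - |x| ≤ 23/32 * |x|^2 := by
    have a : |x|^3 ≤ |x|^2 := pow_le_pow_of_le_one hx0 hx1 (by norm_num)
    have b : |x|^4 ≤ |x|^2 := pow_le_pow_of_le_one hx0 hx1 (by norm_num)
    linarith
  have hw : 0 < u * (1-u) := by positivity
  refine hG.trans ((mul_le_mul_of_nonneg_left hq hw.le).trans ?_)
  have c1 := aux_cosh_low t
  have c2 := aux_cosh_up B hB0.le hB3
  have cB := Real.one_le_cosh B
  have ct := Real.one_le_cosh t
  rw [le_div_iff₀ (by positivity)]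
  have hw' : u * (1-u) = 1 / (2 + 2 * Real.cosh t) := by
    rw [eq_div_iff (by positivity)]; exact hD
  rw [hw', one_div, mul_assoc, inv_mul_le_iff₀ (by positivity)]
  have hpi : (984/100 : ℝ) ≤ Real.pi^2 := by nlinarith [Real.pi_gt_d2]
  have hs : |x|^2 * B^2 ≤ t^2 := by
    rw [← mul_pow, ← sq_abs t]
    exact pow_le_pow_left₀ (by positivity) hxB 2
  have htb2 : |x|^2 ≤ 1 := by nlinarith
  have m1 : 23/32 * |x|^2 * (6 * (2 + 2 * Real.cosh B)) ≤
      23/32 * |x|^2 * (6 * (4 + 22/10 * B^2)) := by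
    apply mul_le_mul_of_nonneg_left _ (by positivity)
    linarith
  have m2 : (4 + t^2) * (984/100) ≤ (2 + 2 * Real.cosh t) * Real.pi^2 := by
    apply mul_le_mul (by linarith) hpi (by norm_num) (by positivity)
  refine m1.trans (le_trans ?_ m2)
  nlinarith [sq_nonneg t]

/-- Data-independent proximity bound under setting (S1): if `0 < B ≤ 3`, the black-box
posterior `ρᵤ` is a.e. clipped to `[1/(1+e^B), 1/(1+e^{−B})]` and `|α − 1| ≤ 1/B` a.e.,
then the expected KL divergence between `ρᵤ` and the wrapped posterior
`ρ_f = T_{α(x)}(ρᵤ(x))` is at most `π²/(6(2 + e^B + e^{−B}))`. -/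
theorem integral_bernKL_alphaCorr_le {X : Type*} [MeasurableSpace X]
    (μ : Measure X) [IsProbabilityMeasure μ]
    (B : ℝ) (hB0 : 0 < B) (hB3 : B ≤ 3)
    (ρu : X → ℝ) (hρum : Measurable ρu)
    (α : X → ℝ) (hαm : Measurable α)
    (hρu : ∀ᵐ x ∂μ, 1 / (1 + Real.exp B) ≤ ρu x ∧ ρu x ≤ 1 / (1 + Real.exp (-B)))
    (hα : ∀ᵐ x ∂μ, |α x - 1| ≤ 1 / B) :
    ∫ x, bernKL (ρu x) (alphaCorr (α x) (ρu x)) ∂μ ≤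
      Real.pi ^ 2 / (6 * (2 + Real.exp B + Real.exp (-B))) := by
  by_cases hi : Integrable (fun x => bernKL (ρu x) (alphaCorr (α x) (ρu x))) μ
  · have h := integral_mono_ae hi (integrable_const
      (Real.pi ^ 2 / (6 * (2 + Real.exp B + Real.exp (-B))))) (by
        filter_upwards [hρu, hα] with x h1 h2
        exact aux_pt B (ρu x) (α x) hB0 hB3 h1.1 h1.2 h2)
    simpa using h
  · rw [integral_undef hi]
    positivity
end

section
/- Let μ be a probability measure on a measurable space X, let ρ_u : X → (0,1) and α : X → ℝ be measurable, and suppose |logit(ρ_u(x)) · (1 − α(x))| ≤ 1 for μ-almost every x. Define ρ_f(x) := T_{α(x)}(ρ_u(x)). Then ∫_X KL(ρ_u(x)‖ρ_f(x)) dμ(x) ≤ π²/24. -/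
open MeasureTheory

lemma exp_quad_bound (d : ℝ) (hd : |d| ≤ 1) : Real.exp d - 1 - d ≤ 3 / 4 := by
  have h := Real.exp_bound (x := d) hd (n := 3) (by norm_num)
  have h3 : |d| ^ 3 ≤ 1 := pow_le_one₀ (abs_nonneg d) hd
  have h2 : d ^ 2 ≤ 1 := by
    rw [← sq_abs]; exact pow_le_one₀ (abs_nonneg d) hd
  have h4 := (abs_le.mp h).2
  norm_num [Finset.sum_range_succ, Nat.factorial] at h4
  nlinarith

lemma bernKL_alphaCorr_eq (a u : ℝ) (h0 : 0 < u) (h1 : u < 1) :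
    bernKL u (alphaCorr a u) =
      Real.log (1 + u * (Real.exp (-(logit u * (1 - a))) - 1)) + u * (logit u * (1 - a)) := by
  have hv : 0 < 1 - u := by linarith
  have hA : 0 < u ^ a := Real.rpow_pos_of_pos h0 a
  have hB : 0 < (1 - u) ^ a := Real.rpow_pos_of_pos hv a
  have hD : 0 < u ^ a + (1 - u) ^ a := by positivity
  have hc : 1 - alphaCorr a u = (1 - u) ^ a / (u ^ a + (1 - u) ^ a) := by
    unfold alphaCorr; field_simp; ring
  have hl : logit u = Real.log u - Real.log (1 - u) := by
    unfold logit; rw [Real.log_div h0.ne' hv.ne']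
  have hfac : 1 + u * (Real.exp (-(logit u * (1 - a))) - 1)
      = (u ^ a + (1 - u) ^ a) * Real.exp ((1 - a) * Real.log (1 - u)) := by
    have e1 : (1 - u) ^ a * Real.exp ((1 - a) * Real.log (1 - u)) = 1 - u := by
      rw [Real.rpow_def_of_pos hv, ← Real.exp_add]
      rw [show Real.log (1 - u) * a + (1 - a) * Real.log (1 - u) = Real.log (1 - u) by ring]
      exact Real.exp_log hv
    have e2 : u ^ a * Real.exp ((1 - a) * Real.log (1 - u))
        = u * Real.exp (-(logit u * (1 - a))) := by
      nth_rewrite 3 [← Real.exp_log h0]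
      rw [Real.rpow_def_of_pos h0, ← Real.exp_add, ← Real.exp_add, hl]
      congr 1; ring
    rw [add_mul, e1, e2]; ring
  rw [hfac, Real.log_mul hD.ne' (Real.exp_pos _).ne', Real.log_exp]
  unfold bernKL
  rw [hc]
  unfold alphaCorr
  rw [Real.log_div h0.ne' (by positivity), Real.log_div hv.ne' (by positivity),
    Real.log_div hA.ne' hD.ne', Real.log_div hB.ne' hD.ne', Real.log_rpow h0, Real.log_rpow hv, hl]
  ring

lemma bernKL_half (a u : ℝ) (h0 : 0 < u) (h1 : u ≤ 1 / 2) (h : |logit u * (1 - a)| ≤ 1) :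
    bernKL u (alphaCorr a u) ≤ 3 / 8 := by
  rw [bernKL_alphaCorr_eq a u h0 (by linarith)]
  have hb := exp_quad_bound (-(logit u * (1 - a))) (by rwa [abs_neg])
  have hp := Real.exp_pos (-(logit u * (1 - a)))
  have hlog := Real.log_le_sub_one_of_pos
    (show 0 < 1 + u * (Real.exp (-(logit u * (1 - a))) - 1) by nlinarith)
  nlinarith

lemma bernKL_symm (a u : ℝ) (h0 : 0 < u) (h1 : u < 1) :
    bernKL (1 - u) (alphaCorr a (1 - u)) = bernKL u (alphaCorr a u) := by
  have hv : 0 < 1 - u := by linarith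
  have hA : 0 < u ^ a := Real.rpow_pos_of_pos h0 a
  have hB : 0 < (1 - u) ^ a := Real.rpow_pos_of_pos hv a
  have hc : alphaCorr a (1 - u) = 1 - alphaCorr a u := by
    unfold alphaCorr; rw [sub_sub_cancel]; field_simp; ring
  rw [hc]; unfold bernKL; rw [sub_sub_cancel, sub_sub_cancel]; ring

lemma bernKL_le (a u : ℝ) (h0 : 0 < u) (h1 : u < 1) (h : |logit u * (1 - a)| ≤ 1) :
    bernKL u (alphaCorr a u) ≤ 3 / 8 := by
  rcases le_total u (1 / 2) with hu | hu
  · exact bernKL_half a u h0 hu h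
  · rw [← bernKL_symm a u h0 h1]
    apply bernKL_half a (1 - u) (by linarith) (by linarith)
    have : logit (1 - u) = -logit u := by
      unfold logit
      rw [sub_sub_cancel, ← Real.log_inv, inv_div]
    rwa [this, neg_mul, abs_neg]

/-- Proximity bound under setting (S2): if `|logit(ρᵤ(x))·(1 − α(x))| ≤ 1` a.e., then the
expected KL divergence between `ρᵤ` and `ρ_f = T_{α(x)}(ρᵤ(x))` is at most `π²/24`. -/
theorem integral_bernKL_alphaCorr_le_S2 {X : Type*} [MeasurableSpace X]
    (μ : Measure X) [IsProbabilityMeasure μ]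
    (ρu : X → ℝ) (hρum : Measurable ρu)
    (hρu : ∀ x, ρu x ∈ Set.Ioo (0 : ℝ) 1)
    (α : X → ℝ) (hαm : Measurable α)
    (hS2 : ∀ᵐ x ∂μ, |logit (ρu x) * (1 - α x)| ≤ 1) :
    ∫ x, bernKL (ρu x) (alphaCorr (α x) (ρu x)) ∂μ ≤ Real.pi ^ 2 / 24 := by
  have hpi : (3 : ℝ) / 8 ≤ Real.pi ^ 2 / 24 := by nlinarith [Real.pi_gt_three]
  refine le_trans ?_ hpi
  by_cases hi : Integrable (fun x => bernKL (ρu x) (alphaCorr (α x) (ρu x))) μ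
  · have hm := integral_mono_ae hi (integrable_const (3 / 8 : ℝ)) (by
      filter_upwards [hS2] with x hx
      exact bernKL_le (α x) (ρu x) (hρu x).1 (hρu x).2 hx)
    simpa using hm
  · rw [integral_undef hi]; norm_num
end

section
/- (Entropy upper bound for conservative α-tree scoring.) Let μ be a probability measure on a measurable space X, let η̃ : X → [0,1] be measurable (the target posterior), let B > 0, and let ρ_u : X → ℝ be measurable with 1/(1+exp(B)) ≤ ρ_u(x) ≤ 1/(1+exp(−B)) for all x. Let A_1, …, A_n be a finite measurable partition of X with μ(A_i) > 0 for each i, and define the alignment edge e_i := (1/μ(A_i)) · ∫_{A_i} (2η̃(x) − 1)·logit(ρ_u(x))/B dμ(x); assume |e_i| < 1 for each i. Define α(x) := (1/B)·log((1+e_i)/(1−e_i)) for x ∈ A_i, and ρ_f(x) := T_{α(x)}(ρ_u(x)). Then ∫_X [ η̃(x)·(−log ρ_f(x)) + (1 − η̃(x))·(−log(1 − ρ_f(x))) ] dμ(x) ≤ Σ_{i=1}^n μ(A_i)·H((1 + e_i)/2). -/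
open MeasureTheory

/-- Binary Shannon entropy with natural logarithm (`0·log 0 = 0` by convention). -/
noncomputable def binEnt (q : ℝ) : ℝ := -q * Real.log q - (1 - q) * Real.log (1 - q)

lemma aux_log_cosh (p q : ℝ) :
    Real.log (Real.exp p + Real.exp q) = Real.log (2 * Real.cosh ((p - q) / 2)) + (p + q) / 2 := by
  have h : Real.exp p + Real.exp q = 2 * Real.cosh ((p - q) / 2) * Real.exp ((p + q) / 2) := by
    rw [Real.cosh_eq]
    have h1 : Real.exp p = Real.exp ((p - q) / 2) * Real.exp ((p + q) / 2) := by
      rw [← Real.exp_add]; congr 1; ring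
    have h2 : Real.exp q = Real.exp (-((p - q) / 2)) * Real.exp ((p + q) / 2) := by
      rw [← Real.exp_add]; congr 1; ring
    rw [h1, h2]; ring
  rw [h, Real.log_mul (by have := Real.cosh_pos ((p - q) / 2); positivity)
    (Real.exp_pos _).ne', Real.log_exp]

lemma aux_range (B u : ℝ) (h1 : 1 / (1 + Real.exp B) ≤ u) (h2 : u ≤ 1 / (1 + Real.exp (-B))) :
    0 < u ∧ u < 1 ∧ |Real.log u - Real.log (1 - u)| ≤ B := by
  have hE := Real.exp_pos B
  have hE' := Real.exp_pos (-B)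
  have hu : 0 < u := lt_of_lt_of_le (by positivity) h1
  have hu1 : u < 1 := lt_of_le_of_lt h2 (by rw [div_lt_one (by positivity)]; linarith)
  have h1u : 0 < 1 - u := by linarith
  refine ⟨hu, hu1, abs_le.mpr ⟨?_, ?_⟩⟩
  · rw [div_le_iff₀ (by positivity)] at h1
    have : Real.log (1 - u) ≤ Real.log (u * Real.exp B) := Real.log_le_log h1u (by linarith)
    rw [Real.log_mul hu.ne' hE.ne', Real.log_exp] at this
    linarith
  · rw [le_div_iff₀ (by positivity)] at h2
    have : Real.log (u * Real.exp (-B)) ≤ Real.log (1 - u) :=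
      Real.log_le_log (by positivity) (by linarith)
    rw [Real.log_mul hu.ne' hE'.ne', Real.log_exp] at this
    linarith

lemma aux_logs (a u : ℝ) (hu : 0 < u) (hu1 : u < 1) :
    Real.log (alphaCorr a u) = a * Real.log u
        - Real.log (Real.exp (a * Real.log u) + Real.exp (a * Real.log (1 - u))) ∧
    Real.log (1 - alphaCorr a u) = a * Real.log (1 - u)
        - Real.log (Real.exp (a * Real.log u) + Real.exp (a * Real.log (1 - u))) := by
  have h1u : 0 < 1 - u := by linarith
  unfold alphaCorr
  rw [Real.rpow_def_of_pos hu, Real.rpow_def_of_pos h1u, mul_comm (Real.log u),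
    mul_comm (Real.log (1 - u))]
  set P := a * Real.log u
  set Q := a * Real.log (1 - u)
  have hP := Real.exp_pos P
  have hQ := Real.exp_pos Q
  have hS : Real.exp P + Real.exp Q ≠ 0 := by positivity
  constructor
  · rw [Real.log_div hP.ne' hS, Real.log_exp]
  · have : 1 - Real.exp P / (Real.exp P + Real.exp Q)
        = Real.exp Q / (Real.exp P + Real.exp Q) := by
      field_simp; ring
    rw [this, Real.log_div hQ.ne' hS, Real.log_exp]

lemma aux_alpha_mem (a u : ℝ) (hu : 0 < u) (hu1 : u < 1) :
    0 < alphaCorr a u ∧ alphaCorr a u < 1 := by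
  have h1 : 0 < u ^ a := Real.rpow_pos_of_pos hu a
  have h2 : 0 < (1 - u) ^ a := Real.rpow_pos_of_pos (by linarith) a
  unfold alphaCorr
  exact ⟨by positivity, by rw [div_lt_one (by positivity)]; linarith⟩

lemma aux_pointwise (B e u h : ℝ) (hB : 0 < B) (he : |e| < 1)
    (h1 : 1 / (1 + Real.exp B) ≤ u) (h2 : u ≤ 1 / (1 + Real.exp (-B))) :
    h * (-Real.log (alphaCorr ((1 / B) * Real.log ((1 + e) / (1 - e))) u))
      + (1 - h) * (-Real.log (1 - alphaCorr ((1 / B) * Real.log ((1 + e) / (1 - e))) u)) ≤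
    (Real.log 2 - (Real.log (1 + e) + Real.log (1 - e)) / 2)
      - (Real.log (1 + e) - Real.log (1 - e)) / 2 * ((2 * h - 1) * logit u / B) := by
  obtain ⟨hu, hu1, habs⟩ := aux_range B u h1 h2
  obtain ⟨he1, he2⟩ := abs_lt.mp he
  have hp : 0 < 1 + e := by linarith
  have hm : 0 < 1 - e := by linarith
  have h1u : 0 < 1 - u := by linarith
  obtain ⟨l1, l2⟩ := aux_logs ((1 / B) * Real.log ((1 + e) / (1 - e))) u hu hu1
  rw [l1, l2, aux_log_cosh]
  have k := aux_log_cosh (Real.log (1 + e)) (Real.log (1 - e))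
  rw [Real.exp_log hp, Real.exp_log hm, show (1 + e) + (1 - e) = 2 by ring] at k
  rw [k, Real.log_div hp.ne' hm.ne', logit, Real.log_div hu.ne' h1u.ne']
  set L := Real.log (1 + e) - Real.log (1 - e)
  set U := Real.log u
  set V := Real.log (1 - u)
  have hc : Real.log (2 * Real.cosh ((1 / B * L * U - 1 / B * L * V) / 2))
      ≤ Real.log (2 * Real.cosh (L / 2)) := by
    apply Real.log_le_log (by have := Real.cosh_pos ((1 / B * L * U - 1 / B * L * V) / 2); positivity)
    have : Real.cosh ((1 / B * L * U - 1 / B * L * V) / 2) ≤ Real.cosh (L / 2) := by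
      rw [Real.cosh_le_cosh]
      have : (1 / B * L * U - 1 / B * L * V) / 2 = L / 2 * ((U - V) / B) := by ring
      rw [this, abs_mul]
      refine mul_le_of_le_one_right (abs_nonneg _) ?_
      rw [abs_div, abs_of_pos hB, div_le_one hB]
      exact habs
    linarith
  have hr : L / 2 * ((2 * h - 1) * (U - V) / B)
      = (2 * h - 1) * (1 / B * L * U - 1 / B * L * V) / 2 := by ring
  rw [hr]
  nlinarith [hc]

/-- Entropy upper bound for conservative α-tree scoring: the log-loss risk of the wrapped
posterior `ρ_f = T_{α(x)}(ρᵤ(x))`, with `α` constant on each leaf `A i` equal to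
`(1/B)·log((1+eᵢ)/(1−eᵢ))` where `eᵢ` is the alignment edge of the leaf, is at most
the expected binary entropy `∑ᵢ μ(Aᵢ)·H((1+eᵢ)/2)`. -/
theorem log_loss_le_entropy_conservative {X : Type*} [MeasurableSpace X]
    (μ : Measure X) [IsProbabilityMeasure μ]
    (η : X → ℝ) (hηm : Measurable η) (hη : ∀ x, η x ∈ Set.Icc (0 : ℝ) 1)
    (B : ℝ) (hB : 0 < B)
    (ρu : X → ℝ) (hρum : Measurable ρu)
    (hρu : ∀ x, 1 / (1 + Real.exp B) ≤ ρu x ∧ ρu x ≤ 1 / (1 + Real.exp (-B)))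
    (n : ℕ) (A : Fin n → Set X) (hAm : ∀ i, MeasurableSet (A i))
    (hdisj : Pairwise (Function.onFun Disjoint A))
    (hcover : (⋃ i, A i) = Set.univ)
    (hApos : ∀ i, 0 < (μ (A i)).toReal)
    (e : Fin n → ℝ)
    (he : ∀ i, e i =
      ((μ (A i)).toReal)⁻¹ * ∫ x in A i, (2 * η x - 1) * logit (ρu x) / B ∂μ)
    (hee : ∀ i, |e i| < 1)
    (α : X → ℝ)
    (hα : ∀ i, ∀ x ∈ A i, α x = (1 / B) * Real.log ((1 + e i) / (1 - e i)))
    (ρf : X → ℝ) (hρf : ∀ x, ρf x = alphaCorr (α x) (ρu x)) :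
    ∫ x, (η x * (-Real.log (ρf x)) + (1 - η x) * (-Real.log (1 - ρf x))) ∂μ ≤
      ∑ i, (μ (A i)).toReal * binEnt ((1 + e i) / 2) := by
  classical
  have hint : Integrable (fun x => (2 * η x - 1) * logit (ρu x) / B) μ := by
    refine Integrable.of_bound (C := 1) ?_ (Filter.Eventually.of_forall fun x => ?_)
    · unfold logit
      exact Measurable.aestronglyMeasurable (by fun_prop)
    · obtain ⟨hu, hu1, habs⟩ := aux_range B (ρu x) (hρu x).1 (hρu x).2
      have h1u : 0 < 1 - ρu x := by linarith
      rw [logit, Real.log_div hu.ne' h1u.ne', Real.norm_eq_abs, abs_div, abs_mul,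
        abs_of_pos hB, div_le_one hB]
      have : |2 * η x - 1| ≤ 1 := abs_le.mpr ⟨by linarith [(hη x).1], by linarith [(hη x).2]⟩
      calc _ ≤ 1 * B := mul_le_mul this habs (abs_nonneg _) zero_le_one
        _ = B := one_mul B
  let g : Fin n → X → ℝ := fun i x =>
    (Real.log 2 - (Real.log (1 + e i) + Real.log (1 - e i)) / 2)
      - (Real.log (1 + e i) - Real.log (1 - e i)) / 2 * ((2 * η x - 1) * logit (ρu x) / B)
  have hg : ∀ i, Integrable (g i) μ := fun i => (integrable_const _).sub (hint.const_mul _)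
  have hgi : ∀ i, Integrable ((A i).indicator (g i)) μ := fun i => (hg i).indicator (hAm i)
  have hle : ∫ x, (η x * (-Real.log (ρf x)) + (1 - η x) * (-Real.log (1 - ρf x))) ∂μ ≤
      ∫ x, ∑ i, (A i).indicator (g i) x ∂μ := by
    refine integral_mono_of_nonneg (Filter.Eventually.of_forall fun x => ?_)
      (integrable_finsetSum _ fun i _ => hgi i) (Filter.Eventually.of_forall fun x => ?_)
    · obtain ⟨hu, hu1, -⟩ := aux_range B (ρu x) (hρu x).1 (hρu x).2
      obtain ⟨r0, r1⟩ := aux_alpha_mem (α x) (ρu x) hu hu1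
      rw [← hρf] at r0 r1
      have a1 := Real.log_nonpos r0.le r1.le
      have a2 := Real.log_nonpos (x := 1 - ρf x) (by linarith) (by linarith)
      exact add_nonneg (mul_nonneg (hη x).1 (by linarith))
        (mul_nonneg (by linarith [(hη x).2]) (by linarith))
    · obtain ⟨i, hi⟩ := Set.mem_iUnion.mp (hcover ▸ Set.mem_univ x : x ∈ ⋃ i, A i)
      have hs : ∑ j, (A j).indicator (g j) x = g i x := by
        rw [Finset.sum_eq_single i, Set.indicator_of_mem hi]
        · intro j _ hj
          exact Set.indicator_of_notMem
            (fun hx => Set.disjoint_left.mp (hdisj hj) hx hi) _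
        · simp
      show _ ≤ ∑ j, (A j).indicator (g j) x
      rw [hs]
      simp only [hρf, hα i x hi]
      exact aux_pointwise B (e i) (ρu x) (η x) hB (hee i) (hρu x).1 (hρu x).2
  refine hle.trans (le_of_eq ?_)
  rw [integral_finsetSum _ fun i _ => hgi i]
  refine Finset.sum_congr rfl fun i _ => ?_
  rw [integral_indicator (hAm i)]
  have hI : ∫ x in A i, (2 * η x - 1) * logit (ρu x) / B ∂μ = (μ (A i)).toReal * e i := by
    rw [he i, ← mul_assoc, mul_inv_cancel₀ (hApos i).ne', one_mul]
  obtain ⟨he1, he2⟩ := abs_lt.mp (hee i)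
  have hp : 0 < 1 + e i := by linarith
  have hm : 0 < 1 - e i := by linarith
  show ∫ x in A i, ((Real.log 2 - (Real.log (1 + e i) + Real.log (1 - e i)) / 2)
      - (Real.log (1 + e i) - Real.log (1 - e i)) / 2 * ((2 * η x - 1) * logit (ρu x) / B)) ∂μ = _
  rw [integral_sub (integrable_const _) (hint.integrableOn.const_mul _),
    integral_const_mul, hI, setIntegral_const, binEnt,
    show 1 - (1 + e i) / 2 = (1 - e i) / 2 by ring,
    Real.log_div hp.ne' two_ne_zero, Real.log_div hm.ne' two_ne_zero, Measure.real, smul_eq_mul]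
  ring
end

section
/- Fix B > 0 and e⁺, e⁻ > 0, and define J(a) := log 2 − B·a·e⁺ + log((1 + exp(Ba))/2)·(e⁺ + e⁻) for a ∈ ℝ. Then for every a ∈ ℝ, J(a) ≥ log(2)·(1 + (e⁺ + e⁻)·(H(e⁺/(e⁺+e⁻))/log 2 − 1)), and equality holds at a* = (1/B)·log(e⁺/e⁻). -/
theorem leaf_rhs (ep em : ℝ) (hep : 0 < ep) (hem : 0 < em) :
    Real.log 2 * (1 + (ep + em) * (binEnt (ep / (ep + em)) / Real.log 2 - 1)) =
      Real.log 2 + ((ep + em) * Real.log (ep + em) - ep * Real.log ep - em * Real.log em)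
        - (ep + em) * Real.log 2 := by
  have hS : 0 < ep + em := by positivity
  have h2 : Real.log 2 ≠ 0 := (Real.log_pos (by norm_num)).ne'
  have h1 : 1 - ep / (ep + em) = em / (ep + em) := by field_simp; ring
  have hH : (ep + em) * binEnt (ep / (ep + em)) =
      (ep + em) * Real.log (ep + em) - ep * Real.log ep - em * Real.log em := by
    unfold binEnt
    rw [h1, Real.log_div hep.ne' hS.ne', Real.log_div hem.ne' hS.ne']
    field_simp
    ring
  rw [← hH]
  field_simp
  ring

/-- For `B > 0` and `e⁺, e⁻ > 0`, the function
`J(a) = log 2 − Ba·e⁺ + log((1 + exp(Ba))/2)·(e⁺ + e⁻)` is bounded below by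
`log 2·(1 + (e⁺+e⁻)·(H(e⁺/(e⁺+e⁻))/log 2 − 1))` and attains this value at
`a* = (1/B)·log(e⁺/e⁻)`. -/
theorem audacious_leaf_value_opt (B ep em : ℝ) (hB : 0 < B) (hep : 0 < ep) (hem : 0 < em) :
    (∀ a : ℝ,
      Real.log 2 * (1 + (ep + em) * (binEnt (ep / (ep + em)) / Real.log 2 - 1)) ≤
        Real.log 2 - B * a * ep + Real.log ((1 + Real.exp (B * a)) / 2) * (ep + em)) ∧
    (Real.log 2 - B * ((1 / B) * Real.log (ep / em)) * ep
        + Real.log ((1 + Real.exp (B * ((1 / B) * Real.log (ep / em)))) / 2) * (ep + em)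
      = Real.log 2 * (1 + (ep + em) * (binEnt (ep / (ep + em)) / Real.log 2 - 1))) := by
  have hS : 0 < ep + em := by positivity
  rw [leaf_rhs ep em hep hem]
  constructor
  · intro a
    generalize B * a = x
    have hx := Real.exp_pos x
    have hy : 0 < 1 + Real.exp x := by positivity
    rw [Real.log_div hy.ne' (by norm_num)]
    have k1 := Real.log_le_sub_one_of_pos
      (show 0 < ((ep + em) * Real.exp x) / (ep * (1 + Real.exp x)) by positivity)
    have k2 := Real.log_le_sub_one_of_pos
      (show 0 < (ep + em) / (em * (1 + Real.exp x)) by positivity)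
    rw [Real.log_div (by positivity) (by positivity), Real.log_mul hS.ne' hx.ne', Real.log_exp,
      Real.log_mul hep.ne' hy.ne'] at k1
    rw [Real.log_div (by positivity) (by positivity), Real.log_mul hem.ne' hy.ne'] at k2
    have m1 := mul_le_mul_of_nonneg_left k1 hep.le
    have m2 := mul_le_mul_of_nonneg_left k2 hem.le
    have e : ep * (((ep + em) * Real.exp x) / (ep * (1 + Real.exp x)) - 1)
        + em * ((ep + em) / (em * (1 + Real.exp x)) - 1) = 0 := by
      field_simp
      ring
    linarith
  · have hx : B * ((1 / B) * Real.log (ep / em)) = Real.log (ep / em) := by field_simp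
    have h1 : 1 + ep / em = (ep + em) / em := by field_simp; ring
    rw [hx, Real.exp_log (by positivity), h1, Real.log_div (div_pos hS hem).ne' two_ne_zero,
      Real.log_div hS.ne' hem.ne', Real.log_div hep.ne' hem.ne']
    ring
end

section
/- (Entropy upper bound for audacious α-tree scoring.) Let μ be a probability measure on a measurable space X, let η̃ : X → [0,1] be measurable, let B > 0, and let ρ_u : X → ℝ be measurable with 1/(1+exp(B)) ≤ ρ_u(x) ≤ 1/(1+exp(−B)) for all x. Write λ(x) := logit(ρ_u(x))/B ∈ [−1,1]. Let A_1, …, A_n be a finite measurable partition of X with μ(A_i) > 0 for each i, and define e_i⁺ := (1/μ(A_i)) · ∫_{A_i} [ η̃(x)·max(0, λ(x)) + (1−η̃(x))·max(0, −λ(x)) ] dμ(x) and e_i⁻ := (1/μ(A_i)) · ∫_{A_i} [ η̃(x)·max(0, −λ(x)) + (1−η̃(x))·max(0, λ(x)) ] dμ(x); assume e_i⁺ > 0 and e_i⁻ > 0 for each i. Define α(x) := (1/B)·log(e_i⁺/e_i⁻) for x ∈ A_i, and ρ_f(x) := T_{α(x)}(ρ_u(x)). Then ∫_X [ η̃(x)·(−log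 ρ_f(x)) + (1 − η̃(x))·(−log(1 − ρ_f(x))) ] dμ(x) ≤ Σ_{i=1}^n μ(A_i) · log(2)·(1 + (e_i⁺ + e_i⁻)·(H(e_i⁺/(e_i⁺+e_i⁻))/log 2 − 1)). -/
open MeasureTheory

lemma sp_aux (s y : ℝ) (h0 : 0 ≤ s) (h1 : s ≤ 1) :
    Real.log (1 + Real.exp (s * y)) ≤
      Real.log 2 + s * (Real.log (1 + Real.exp y) - Real.log 2) := by
  have hy := Real.exp_pos y
  have hcc : ConcaveOn ℝ (Set.Ici 0) fun x : ℝ => x ^ s := Real.concaveOn_rpow h0 h1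
  have hc := hcc.2 (Set.mem_Ici.2 (zero_le_one' ℝ)) (Set.mem_Ici.2 hy.le)
    (by norm_num : (0 : ℝ) ≤ 1 / 2) (by norm_num : (0 : ℝ) ≤ 1 / 2) (by norm_num)
  simp only [smul_eq_mul, Real.one_rpow] at hc
  rw [← Real.exp_mul, mul_comm y s] at hc
  have e : (1/2 * 1 + 1/2 * Real.exp y : ℝ) = (1 + Real.exp y) / 2 := by ring
  rw [e] at hc
  have hp : (0:ℝ) < (1 + Real.exp y) / 2 := by positivity
  have h2 : 1 + Real.exp (s * y) ≤ 2 * ((1 + Real.exp y) / 2) ^ s := by linarith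
  have h3 := Real.log_le_log (by positivity) h2
  rw [Real.log_mul (by norm_num) (by positivity), Real.log_rpow hp,
    Real.log_div (by positivity) (by norm_num)] at h3
  exact h3

lemma sp_signed (l y : ℝ) (h0 : -1 ≤ l) (h1 : l ≤ 1) :
    Real.log (1 + Real.exp (l * y)) ≤
      Real.log 2 + max 0 l * (Real.log (1 + Real.exp y) - Real.log 2)
        + max 0 (-l) * (Real.log (1 + Real.exp (-y)) - Real.log 2) := by
  rcases le_total 0 l with h | h
  · rw [max_eq_right h, max_eq_left (by linarith)]
    have := sp_aux l y h h1
    linarith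
  · rw [max_eq_left h, max_eq_right (by linarith)]
    have := sp_aux (-l) (-y) (by linarith) (by linarith)
    rw [neg_mul_neg] at this
    linarith

lemma logit_bound (B u : ℝ)
    (hu : 1 / (1 + Real.exp B) ≤ u ∧ u ≤ 1 / (1 + Real.exp (-B))) :
    0 < u ∧ u < 1 ∧ -B ≤ logit u ∧ logit u ≤ B := by
  have hE := Real.exp_pos B
  have hE' := Real.exp_pos (-B)
  have hmul : Real.exp B * Real.exp (-B) = 1 := by rw [← Real.exp_add]; simp
  obtain ⟨h1, h2⟩ := hu
  have u0 : 0 < u := lt_of_lt_of_le (by positivity) h1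
  have u1 : u < 1 := lt_of_le_of_lt h2 (by rw [div_lt_one (by positivity)]; linarith)
  rw [div_le_iff₀ (by positivity)] at h1
  rw [le_div_iff₀ (by positivity)] at h2
  have hv : 0 < 1 - u := by linarith
  refine ⟨u0, u1, ?_, ?_⟩
  · unfold logit
    rw [Real.le_log_iff_exp_le (by positivity), le_div_iff₀ hv]
    have : (1 - u) * Real.exp (-B) ≤ u * Real.exp B * Real.exp (-B) :=
      mul_le_mul_of_nonneg_right (by linarith) hE'.le
    rw [mul_assoc, hmul] at this
    linarith
  · unfold logit
    rw [Real.log_le_iff_le_exp (by positivity), div_le_iff₀ hv]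
    have : u * Real.exp (-B) * Real.exp B ≤ (1 - u) * Real.exp B :=
      mul_le_mul_of_nonneg_right (by linarith) hE.le
    rw [mul_assoc, mul_comm (Real.exp (-B)), hmul] at this
    linarith

lemma log_corr (a u : ℝ) (u0 : 0 < u) (u1 : u < 1) :
    -Real.log (alphaCorr a u) = Real.log (1 + Real.exp (-(a * logit u))) ∧
    -Real.log (1 - alphaCorr a u) = Real.log (1 + Real.exp (a * logit u)) := by
  have hv : 0 < 1 - u := by linarith
  have hp := Real.rpow_pos_of_pos u0 a
  have hq := Real.rpow_pos_of_pos hv a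
  have e : Real.exp (a * logit u) = u ^ a / (1 - u) ^ a := by
    unfold logit
    rw [mul_comm, Real.exp_mul, Real.exp_log (by positivity), Real.div_rpow u0.le hv.le]
  rw [Real.exp_neg, e]
  unfold alphaCorr
  rw [← Real.log_inv, ← Real.log_inv]
  constructor
  · congr 1; field_simp
  · congr 1
    have : 1 - u ^ a / (u ^ a + (1 - u) ^ a) = (1 - u) ^ a / (u ^ a + (1 - u) ^ a) := by
      field_simp; ring
    rw [this]; field_simp; ring

lemma ent_eq (p m : ℝ) (hp : 0 < p) (hm : 0 < m) :
    Real.log 2 * (1 + (p + m) * (binEnt (p / (p + m)) / Real.log 2 - 1)) =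
      Real.log 2 + p * (Real.log (1 + Real.exp (-Real.log (p / m))) - Real.log 2)
        + m * (Real.log (1 + Real.exp (Real.log (p / m))) - Real.log 2) := by
  have hl : Real.log 2 ≠ 0 := (Real.log_pos (by norm_num)).ne'
  have hs : 0 < p + m := by linarith
  rw [Real.exp_neg, Real.exp_log (by positivity)]
  have e1 : 1 + (p / m)⁻¹ = (p + m) / p := by field_simp
  have e2 : 1 + p / m = (p + m) / m := by field_simp; ring
  have e3 : 1 - p / (p + m) = m / (p + m) := by field_simp; ring
  rw [e1, e2]
  unfold binEnt
  rw [e3, Real.log_div hs.ne' hp.ne', Real.log_div hs.ne' hm.ne',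
    Real.log_div hp.ne' hs.ne', Real.log_div hm.ne' hs.ne']
  field_simp
  ring

/-- Entropy upper bound for audacious α-tree scoring: with `α` constant on each leaf `A i`
equal to `(1/B)·log(eᵢ⁺/eᵢ⁻)` where `eᵢ⁺, eᵢ⁻` are the positive/negative parts of the
alignment edge of the leaf, the log-loss risk of the wrapped posterior
`ρ_f = T_{α(x)}(ρᵤ(x))` is at most
`∑ᵢ μ(Aᵢ)·log 2·(1 + (eᵢ⁺+eᵢ⁻)(H(eᵢ⁺/(eᵢ⁺+eᵢ⁻))/log 2 − 1))`. -/
theorem log_loss_le_entropy_audacious {X : Type*} [MeasurableSpace X]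
    (μ : Measure X) [IsProbabilityMeasure μ]
    (η : X → ℝ) (hηm : Measurable η) (hη : ∀ x, η x ∈ Set.Icc (0 : ℝ) 1)
    (B : ℝ) (hB : 0 < B)
    (ρu : X → ℝ) (hρum : Measurable ρu)
    (hρu : ∀ x, 1 / (1 + Real.exp B) ≤ ρu x ∧ ρu x ≤ 1 / (1 + Real.exp (-B)))
    (n : ℕ) (A : Fin n → Set X) (hAm : ∀ i, MeasurableSet (A i))
    (hdisj : Pairwise (Function.onFun Disjoint A))
    (hcover : (⋃ i, A i) = Set.univ)
    (hApos : ∀ i, 0 < (μ (A i)).toReal)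
    (ep em : Fin n → ℝ)
    (hep : ∀ i, ep i = ((μ (A i)).toReal)⁻¹ *
      ∫ x in A i, (η x * max 0 (logit (ρu x) / B)
        + (1 - η x) * max 0 (-(logit (ρu x) / B))) ∂μ)
    (hem : ∀ i, em i = ((μ (A i)).toReal)⁻¹ *
      ∫ x in A i, (η x * max 0 (-(logit (ρu x) / B))
        + (1 - η x) * max 0 (logit (ρu x) / B)) ∂μ)
    (hep0 : ∀ i, 0 < ep i) (hem0 : ∀ i, 0 < em i)
    (α : X → ℝ)
    (hα : ∀ i, ∀ x ∈ A i, α x = (1 / B) * Real.log (ep i / em i))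
    (ρf : X → ℝ) (hρf : ∀ x, ρf x = alphaCorr (α x) (ρu x)) :
    ∫ x, (η x * (-Real.log (ρf x)) + (1 - η x) * (-Real.log (1 - ρf x))) ∂μ ≤
      ∑ i, (μ (A i)).toReal *
        (Real.log 2 *
          (1 + (ep i + em i) * (binEnt (ep i / (ep i + em i)) / Real.log 2 - 1))) := by
  classical
  set P : X → ℝ := fun x => η x * max 0 (logit (ρu x) / B)
        + (1 - η x) * max 0 (-(logit (ρu x) / B)) with hP
  set M : X → ℝ := fun x => η x * max 0 (-(logit (ρu x) / B))
        + (1 - η x) * max 0 (logit (ρu x) / B) with hM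
  set L : Fin n → ℝ := fun i => Real.log (ep i / em i) with hL
  set a : Fin n → ℝ := fun i => Real.log (1 + Real.exp (-L i)) - Real.log 2 with ha
  set b : Fin n → ℝ := fun i => Real.log (1 + Real.exp (L i)) - Real.log 2 with hb
  have hPi : ∀ i, IntegrableOn P (A i) μ := by
    intro i
    by_contra h
    have h1 := hep i
    have h2 : ∫ x in A i, P x ∂μ = 0 := integral_undef h
    rw [h2, mul_zero] at h1
    exact (hep0 i).ne' h1
  have hMi : ∀ i, IntegrableOn M (A i) μ := by
    intro i
    by_contra h
    have h1 := hem i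
    have h2 : ∫ x in A i, M x ∂μ = 0 := integral_undef h
    rw [h2, mul_zero] at h1
    exact (hem0 i).ne' h1
  have hci : ∀ i, IntegrableOn (fun _ : X => Real.log 2) (A i) μ := fun i =>
    (integrable_const _).integrableOn
  have hgi : ∀ i, IntegrableOn (fun x => Real.log 2 + P x * a i + M x * b i) (A i) μ := fun i =>
    ((hci i).add ((hPi i).mul_const (a i))).add ((hMi i).mul_const (b i))
  have hgI : ∀ i, Integrable
      ((A i).indicator (fun x => Real.log 2 + P x * a i + M x * b i)) μ := fun i =>
    (integrable_indicator_iff (hAm i)).2 (hgi i)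
  have hval : ∀ i, ∫ x, (A i).indicator (fun x => Real.log 2 + P x * a i + M x * b i) x ∂μ =
      (μ (A i)).toReal * (Real.log 2 *
          (1 + (ep i + em i) * (binEnt (ep i / (ep i + em i)) / Real.log 2 - 1))) := by
    intro i
    have hpos := (hApos i).ne'
    have h1 : ∫ x in A i, P x ∂μ = (μ (A i)).toReal * ep i := by
      rw [hep i]; field_simp
    have h2 : ∫ x in A i, M x ∂μ = (μ (A i)).toReal * em i := by
      rw [hem i]; field_simp
    have h3 : ∫ x in A i, (Real.log 2 + P x * a i + M x * b i) ∂μ =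
        (μ (A i)).toReal * Real.log 2 + (∫ x in A i, P x ∂μ) * a i
          + (∫ x in A i, M x ∂μ) * b i := by
      have hcp : Integrable (fun x => Real.log 2 + P x * a i) (μ.restrict (A i)) :=
        (hci i).add ((hPi i).mul_const (a i))
      rw [integral_add hcp ((hMi i).mul_const (b i)),
        integral_add (hci i) ((hPi i).mul_const (a i)), integral_mul_const, integral_mul_const,
        setIntegral_const, smul_eq_mul]
      rfl
    rw [integral_indicator (hAm i), h3, h1, h2, ent_eq _ _ (hep0 i) (hem0 i)]
    simp only [ha, hb, hL]
    ring
  have hsum : ∑ i, (μ (A i)).toReal *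
        (Real.log 2 *
          (1 + (ep i + em i) * (binEnt (ep i / (ep i + em i)) / Real.log 2 - 1))) =
      ∫ x, ∑ i, (A i).indicator (fun x => Real.log 2 + P x * a i + M x * b i) x ∂μ := by
    rw [integral_finsetSum _ (fun i _ => hgI i)]
    exact Finset.sum_congr rfl (fun i _ => (hval i).symm)
  rw [hsum]
  refine integral_mono_of_nonneg (Filter.Eventually.of_forall fun x => ?_)
    (integrable_finsetSum _ (fun i _ => hgI i)) (Filter.Eventually.of_forall fun x => ?_)
  · obtain ⟨u0, u1, -, -⟩ := logit_bound B (ρu x) (hρu x)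
    obtain ⟨c1, c2⟩ := log_corr (α x) (ρu x) u0 u1
    simp only [Pi.zero_apply]
    rw [hρf x, c1, c2]
    have n1 : ∀ y : ℝ, 0 ≤ Real.log (1 + Real.exp y) := fun y =>
      Real.log_nonneg (by linarith [Real.exp_pos y])
    obtain ⟨g0, g1⟩ := hη x
    exact add_nonneg (mul_nonneg g0 (n1 _)) (mul_nonneg (by linarith) (n1 _))
  · obtain ⟨u0, u1, l0, l1⟩ := logit_bound B (ρu x) (hρu x)
    obtain ⟨c1, c2⟩ := log_corr (α x) (ρu x) u0 u1
    obtain ⟨g0, g1⟩ := hη x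
    obtain ⟨i, hi⟩ := Set.mem_iUnion.1 (hcover ▸ Set.mem_univ x : x ∈ ⋃ i, A i)
    have hs : ∑ j, (A j).indicator (fun x => Real.log 2 + P x * a j + M x * b j) x =
        Real.log 2 + P x * a i + M x * b i := by
      rw [Finset.sum_eq_single i, Set.indicator_of_mem hi]
      · intro j _ hji
        exact Set.indicator_of_notMem
          (fun hj => Set.disjoint_left.1 (hdisj hji) hj hi) _
      · simp
    simp only
    rw [hs, hρf x, c1, c2, hα i x hi]
    have e : 1 / B * Real.log (ep i / em i) * logit (ρu x) = logit (ρu x) / B * L i := by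
      simp only [hL]; ring
    rw [e]
    have m0 : -1 ≤ logit (ρu x) / B := by rw [le_div_iff₀ hB]; linarith
    have m1 : logit (ρu x) / B ≤ 1 := by rw [div_le_iff₀ hB]; linarith
    have s1 := sp_signed _ (L i) m0 m1
    have s2 := sp_signed _ (-L i) m0 m1
    rw [mul_neg, neg_neg] at s2
    have t1 := mul_le_mul_of_nonneg_left s1 (sub_nonneg.2 g1)
    have t2 := mul_le_mul_of_nonneg_left s2 g0
    refine (add_le_add t2 t1).trans (le_of_eq ?_)
    simp only [hP, hM, ha, hb]
    ring
end

section
/- For all reals e⁺ ≥ 0 and e⁻ ≥ 0 with 0 < e⁺ + e⁻ ≤ 1, one has log(2)·(1 + (e⁺ + e⁻)·(H(e⁺/(e⁺+e⁻))/log 2 − 1)) ≤ H((1 + e⁺ − e⁻)/2). That is, the per-leaf entropy bound obtained from audacious scoring is never worse than the binary entropy H((1+e)/2) of the alignment edge e = e⁺ − e⁻ used by conservative scoring. -/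
/-- The entropy of the statement is Mathlib's binary entropy. -/
theorem binEnt_eq_binEntropy (q : ℝ) : binEnt q = Real.binEntropy q := by
  unfold binEnt Real.binEntropy
  rw [Real.log_inv, Real.log_inv]
  ring

/-- The per-leaf audacious entropy bound is never worse than the conservative one:
for `e⁺, e⁻ ≥ 0` with `0 < e⁺ + e⁻ ≤ 1`,
`log 2·(1 + (e⁺+e⁻)(H(e⁺/(e⁺+e⁻))/log 2 − 1)) ≤ H((1 + e⁺ − e⁻)/2)`. -/
theorem audacious_le_conservative_entropy (ep em : ℝ) (hep : 0 ≤ ep) (hem : 0 ≤ em)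
    (hsum0 : 0 < ep + em) (hsum1 : ep + em ≤ 1) :
    Real.log 2 * (1 + (ep + em) * (binEnt (ep / (ep + em)) / Real.log 2 - 1)) ≤
      binEnt ((1 + ep - em) / 2) := by
  rw [binEnt_eq_binEntropy, binEnt_eq_binEntropy]
  have hl : Real.log 2 ≠ 0 := (Real.log_pos one_lt_two).ne'
  have hx : ep / (ep + em) ∈ Set.Icc (0 : ℝ) 1 :=
    ⟨by positivity, (div_le_one hsum0).2 (by linarith)⟩
  have hy : (2⁻¹ : ℝ) ∈ Set.Icc (0 : ℝ) 1 := by constructor <;> norm_num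
  have h := Real.strictConcave_binEntropy.concaveOn.2 hx hy hsum0.le
    (sub_nonneg.2 hsum1) (by ring)
  simp only [smul_eq_mul, Real.binEntropy_two_inv] at h
  have e1 : (ep + em) * (ep / (ep + em)) + (1 - (ep + em)) * 2⁻¹ = (1 + ep - em) / 2 := by
    rw [mul_div_cancel₀ _ hsum0.ne']
    ring
  rw [e1] at h
  refine le_of_eq_of_le ?_ h
  generalize Real.binEntropy (ep / (ep + em)) = B
  field_simp
  ring
end

section
/- Let (Ω, 𝒟) be a probability space, let Z : Ω → ℝ be measurable with |Z| ≤ 1, and let h : Ω → {−1, 1} be measurable. Set e_q := E[Z] with |e_q| < 1, τ := 𝒟(h = 1) with 0 < τ < 1, e_r := E[Z·1{h=1}]/τ, e_p := E[Z·1{h=−1}]/(1−τ), q := (1+e_q)/2, and δ := (e_r − e_p)/2. Then the following exact identity holds: E[(1 − e_q·Z)·Z·h]/(1 − e_q²) = τ(1−τ)·δ/(q(1−q)) + e_q·E[(1 − Z²)·h]/(4·q(1−q)). -/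
open MeasureTheory

/-- Exact identity for the balanced edge of a split: with `e_q = E[Z]`, `τ = 𝒟(h = 1)`,
`e_r`, `e_p` the conditional edges of the two children, `q = (1+e_q)/2` and
`δ = (e_r − e_p)/2`, one has
`E[(1 − e_q Z)·Z·h]/(1 − e_q²) = τ(1−τ)δ/(q(1−q)) + e_q·E[(1 − Z²)·h]/(4q(1−q))`. -/
theorem balanced_edge_identity {Ω : Type*} [MeasurableSpace Ω]
    (D : Measure Ω) [IsProbabilityMeasure D]
    (Z h : Ω → ℝ) (hZm : Measurable Z) (hhm : Measurable h)
    (hZ : ∀ ω, |Z ω| ≤ 1) (hh : ∀ ω, h ω = 1 ∨ h ω = -1)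
    (eq τ er ep q δ : ℝ)
    (heq : eq = ∫ ω, Z ω ∂D) (heq1 : |eq| < 1)
    (hτ : τ = (D {ω | h ω = 1}).toReal) (hτ0 : 0 < τ) (hτ1 : τ < 1)
    (her : er = (∫ ω in {ω | h ω = 1}, Z ω ∂D) / τ)
    (hep : ep = (∫ ω in {ω | h ω = -1}, Z ω ∂D) / (1 - τ))
    (hq : q = (1 + eq) / 2) (hδ : δ = (er - ep) / 2) :
    (∫ ω, (1 - eq * Z ω) * Z ω * h ω ∂D) / (1 - eq ^ 2) =
      τ * (1 - τ) * δ / (q * (1 - q)) +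
        eq * (∫ ω, (1 - Z ω ^ 2) * h ω ∂D) / (4 * (q * (1 - q))) := by
  have hS : MeasurableSet {ω | h ω = 1} := hhm (measurableSet_singleton 1)
  have hC : {ω | h ω = -1} = {ω | h ω = 1}ᶜ := by
    ext ω
    simp only [Set.mem_setOf_eq, Set.mem_compl_iff]
    rcases hh ω with h1 | h1 <;> rw [h1] <;> norm_num
  have hhb : ∀ ω, |h ω| ≤ 1 := by
    intro ω
    rcases hh ω with h1 | h1 <;> rw [h1] <;> norm_num
  have key : ∀ f : Ω → ℝ, Measurable f → (∀ ω, |f ω| ≤ 1) → Integrable f D := by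
    intro f hf hb
    exact Integrable.of_bound hf.aestronglyMeasurable 1 (Filter.Eventually.of_forall hb)
  have iZ := key Z hZm hZ
  have ih := key h hhm hhb
  have iZh : Integrable (fun ω => Z ω * h ω) D := by
    refine key _ (hZm.mul hhm) fun ω => ?_
    rw [abs_mul]
    exact mul_le_one₀ (hZ ω) (abs_nonneg _) (hhb ω)
  have iZZh : Integrable (fun ω => Z ω * (Z ω * h ω)) D := by
    refine key _ (hZm.mul (hZm.mul hhm)) fun ω => ?_
    rw [abs_mul, abs_mul]
    exact mul_le_one₀ (hZ ω) (by positivity) (mul_le_one₀ (hZ ω) (abs_nonneg _) (hhb ω))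
  have split : ∀ f : Ω → ℝ, Integrable (fun ω => f ω * h ω) D →
      ∫ ω, f ω * h ω ∂D = (∫ ω in {ω | h ω = 1}, f ω ∂D) - ∫ ω in {ω | h ω = 1}ᶜ, f ω ∂D := by
    intro f hf
    rw [← integral_add_compl hS hf, sub_eq_add_neg, ← integral_neg]
    congr 1
    · refine setIntegral_congr_fun hS fun ω hω => ?_
      have h1 : h ω = 1 := hω
      simp [h1]
    · refine setIntegral_congr_fun hS.compl fun ω hω => ?_
      have h1 : h ω = -1 := (hh ω).resolve_left hω
      simp [h1]
  have e1 := split Z iZh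
  have e2 := integral_add_compl hS iZ
  have e3 : ∫ ω, h ω ∂D = 2 * τ - 1 := by
    have h3 := split (fun _ => 1) (by simpa using ih)
    have h4 : D.real {ω | h ω = 1} = τ := hτ.symm
    simp only [one_mul, setIntegral_const, smul_eq_mul, mul_one, probReal_compl_eq_one_sub hS,
      h4] at h3
    rw [h3]; ring
  have l1 : ∫ ω, (1 - eq * Z ω) * Z ω * h ω ∂D
      = ∫ ω, Z ω * h ω ∂D - eq * ∫ ω, Z ω * (Z ω * h ω) ∂D := by
    rw [← integral_const_mul, ← integral_sub iZh (iZZh.const_mul eq)]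
    congr 1; ext ω; ring
  have l2 : ∫ ω, (1 - Z ω ^ 2) * h ω ∂D
      = ∫ ω, h ω ∂D - ∫ ω, Z ω * (Z ω * h ω) ∂D := by
    rw [← integral_sub ih iZZh]
    congr 1; ext ω; ring
  rw [l1, l2, e3, e1]
  rw [hC] at hep
  rw [← heq] at e2
  generalize (∫ ω in {ω | h ω = 1}, Z ω ∂D) = A at *
  generalize (∫ ω in {ω | h ω = 1}ᶜ, Z ω ∂D) = B at *
  generalize (∫ ω, Z ω * (Z ω * h ω) ∂D) = C at *
  have hd : τ * (1 - τ) * δ = (A - τ * eq) / 2 := by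
    have : 1 - τ ≠ 0 := by linarith
    rw [hδ, her, hep, ← e2]
    field_simp
    ring
  have hqq : q * (1 - q) = (1 - eq ^ 2) / 4 := by rw [hq]; ring
  have hne : 1 - eq ^ 2 ≠ 0 := by
    have := (sq_lt_one_iff_abs_lt_one eq).2 heq1
    linarith
  have hB : B = eq - A := by linarith
  rw [hd, hqq, hB]
  field_simp
  ring
end

section
/- (Weak Hypothesis Assumption implies the boosting split condition.) Let (Ω, 𝒟) be a probability space, let Z : Ω → ℝ be measurable with |Z| ≤ 1, and let h : Ω → {−1, 1} be measurable. Set e_q := E[Z] with |e_q| < 1, τ := 𝒟(h = 1) with 0 < τ < 1, e_r := E[Z·1{h=1}]/τ, e_p := E[Z·1{h=−1}]/(1−τ), q := (1+e_q)/2, and δ := (e_r − e_p)/2. Suppose for some γ > 0 that (i) E[(1 − e_q·Z)·Z·h]/(1 − e_q²) ≥ γ, and (ii) e_q·E[(1 − Z²)·h] ≤ 0. Then τ(1−τ)·δ ≥ γ·q·(1−q). -/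
open MeasureTheory

/-- The Weak Hypothesis Assumption implies the boosting split condition: if the split `h`
has balanced edge at least `γ` (condition (i)) and `e_q·E[(1 − Z²)·h] ≤ 0`
(condition (ii)), then `τ(1−τ)·δ ≥ γ·q(1−q)`. -/
theorem wha_implies_split_condition {Ω : Type*} [MeasurableSpace Ω]
    (D : Measure Ω) [IsProbabilityMeasure D]
    (Z h : Ω → ℝ) (hZm : Measurable Z) (hhm : Measurable h)
    (hZ : ∀ ω, |Z ω| ≤ 1) (hh : ∀ ω, h ω = 1 ∨ h ω = -1)
    (eq τ er ep q δ γ : ℝ) (hγ : 0 < γ)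
    (heq : eq = ∫ ω, Z ω ∂D) (heq1 : |eq| < 1)
    (hτ : τ = (D {ω | h ω = 1}).toReal) (hτ0 : 0 < τ) (hτ1 : τ < 1)
    (her : er = (∫ ω in {ω | h ω = 1}, Z ω ∂D) / τ)
    (hep : ep = (∫ ω in {ω | h ω = -1}, Z ω ∂D) / (1 - τ))
    (hq : q = (1 + eq) / 2) (hδ : δ = (er - ep) / 2)
    (hi : γ ≤ (∫ ω, (1 - eq * Z ω) * Z ω * h ω ∂D) / (1 - eq ^ 2))
    (hii : eq * ∫ ω, (1 - Z ω ^ 2) * h ω ∂D ≤ 0) :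
    γ * (q * (1 - q)) ≤ τ * (1 - τ) * δ := by
  have hS : MeasurableSet {ω | h ω = 1} := hhm (measurableSet_singleton 1)
  have hT : {ω | h ω = -1} = {ω | h ω = 1}ᶜ := by
    ext ω
    simp only [Set.mem_ofPred_eq, Set.mem_compl_iff]
    rcases hh ω with h1 | h1 <;> rw [h1] <;> norm_num
  have hhb : ∀ ω, |h ω| ≤ 1 := by
    intro ω
    rcases hh ω with h1 | h1 <;> rw [h1] <;> norm_num
  have hIZ : Integrable Z D :=
    Integrable.of_bound hZm.aestronglyMeasurable 1 (Filter.Eventually.of_forall hZ)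
  have hIh : Integrable h D :=
    Integrable.of_bound hhm.aestronglyMeasurable 1 (Filter.Eventually.of_forall hhb)
  have hIZh : Integrable (fun ω => Z ω * h ω) D := by
    refine Integrable.of_bound (hZm.mul hhm).aestronglyMeasurable 1
      (Filter.Eventually.of_forall fun ω => ?_)
    rw [Real.norm_eq_abs, abs_mul]
    exact mul_le_one₀ (hZ ω) (abs_nonneg _) (hhb ω)
  have hIW : Integrable (fun ω => (1 - Z ω ^ 2) * h ω) D := by
    refine Integrable.of_bound
      (((measurable_const.sub (hZm.pow_const 2)).mul hhm).aestronglyMeasurable) 1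
      (Filter.Eventually.of_forall fun ω => ?_)
    rw [Real.norm_eq_abs, abs_mul]
    refine mul_le_one₀ ?_ (abs_nonneg _) (hhb ω)
    have h2 : Z ω ^ 2 ≤ 1 := (sq_le_one_iff_abs_le_one _).2 (hZ ω)
    rw [abs_le]
    constructor <;> nlinarith [sq_nonneg (Z ω)]
  have key : ∀ f : Ω → ℝ, Integrable (fun ω => f ω * h ω) D →
      ∫ ω, f ω * h ω ∂D = (∫ ω in {ω | h ω = 1}, f ω ∂D) - ∫ ω in {ω | h ω = -1}, f ω ∂D := by
    intro f hf
    rw [← integral_add_compl hS hf, hT, sub_eq_add_neg, ← integral_neg]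
    congr 1
    · refine setIntegral_congr_fun hS fun ω hω => ?_
      have h1 : h ω = 1 := hω
      simp [h1]
    · refine setIntegral_congr_fun hS.compl fun ω hω => ?_
      have h1 : h ω = -1 := by rw [← hT] at hω; exact hω
      simp [h1]
  have hZh := key Z hIZh
  have hEh : ∫ ω, h ω ∂D = 2 * τ - 1 := by
    have h1 := key (fun _ => 1) (by simpa using hIh)
    have h2 : D.real {ω | h ω = 1}ᶜ = 1 - D.real {ω | h ω = 1} := probReal_compl_eq_one_sub hS
    have h3 : D.real {ω | h ω = 1} = τ := hτ.symm
    simp only [one_mul, hT, setIntegral_const, smul_eq_mul, mul_one, h2, h3] at h1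
    linarith
  have hsum : eq = (∫ ω in {ω | h ω = 1}, Z ω ∂D) + ∫ ω in {ω | h ω = -1}, Z ω ∂D := by
    rw [heq, hT, integral_add_compl hS hIZ]
  have hmain : ∫ ω, (1 - eq * Z ω) * Z ω * h ω ∂D =
      (∫ ω, Z ω * h ω ∂D) - eq * (∫ ω, h ω ∂D) + eq * ∫ ω, (1 - Z ω ^ 2) * h ω ∂D := by
    have hI2 : Integrable (fun ω => Z ω * h ω - eq * h ω) D := hIZh.sub (hIh.const_mul eq)
    rw [← integral_const_mul, ← integral_const_mul, ← integral_sub hIZh (hIh.const_mul eq),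
      ← integral_add hI2 (hIW.const_mul eq)]
    congr 1
    ext ω
    ring
  have hpos : 0 < 1 - eq ^ 2 := by
    have := (sq_lt_one_iff_abs_lt_one eq).2 heq1
    linarith
  rw [le_div_iff₀ hpos, hmain, hZh, hEh] at hi
  have hτ1' : 0 < 1 - τ := by linarith
  rw [eq_div_iff hτ0.ne'] at her
  rw [eq_div_iff hτ1'.ne'] at hep
  rw [← her, ← hep] at hi hsum
  have h4 : γ * (q * (1 - q)) = γ * (1 - eq ^ 2) / 4 := by rw [hq]; ring
  have h5 : τ * (1 - τ) * δ =
      (er * τ - ep * (1 - τ) - (er * τ + ep * (1 - τ)) * (2 * τ - 1)) / 4 := by rw [hδ]; ring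
  rw [h4, h5, ← hsum]
  linarith
end
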